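/- arXiv:0709.4017 — 2 statements merged into one kernel-verified Lean document; each statement's English description precedes it below -/
import Mathlib

section
/- Let S = { x ∈ ℝⁿ : g₁(x) ≥ 0, …, gₘ(x) ≥ 0 } be a compact convex set defined by real polynomials g₁, …, gₘ, and assume S has nonempty interior. If for every u ∈ ∂S and every index i with gᵢ(u) = 0, the polynomial gᵢ is either sos-concave or strictly quasi-concave at u, then S is SDP representable. -/
open MvPolynomial Metric Set Pointwise Filter

noncomputable section

/-- `ℝⁿ` with the Euclidean norm. -/
abbrev Rn (n : ℕ) : Type := EuclideanSpace ℝ (Fin n)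

/-- A set `S ⊆ ℝⁿ` is SDP representable if it is the projection of a spectrahedron:
there are symmetric matrices `A₀, A i, B j` with
`S = { x | ∃ u, A₀ + Σ xᵢ Aᵢ + Σ uⱼ Bⱼ ⪰ 0 }`. -/
def IsSDPRepresentable {n : ℕ} (S : Set (Rn n)) : Prop :=
  ∃ (N d : ℕ) (A₀ : Matrix (Fin d) (Fin d) ℝ)
    (A : Fin n → Matrix (Fin d) (Fin d) ℝ) (B : Fin N → Matrix (Fin d) (Fin d) ℝ),
    A₀.IsSymm ∧ (∀ i, (A i).IsSymm) ∧ (∀ j, (B j).IsSymm) ∧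
    S = {x : Rn n | ∃ u : Fin N → ℝ,
      (A₀ + ∑ i, x i • A i + ∑ j, u j • B j).PosSemidef}

/-- Evaluation of a polynomial at a point of `ℝⁿ`. -/
def peval {n : ℕ} (g : MvPolynomial (Fin n) ℝ) (x : Rn n) : ℝ :=
  MvPolynomial.eval (fun i => x i) g

/-- The gradient `∇g(u)` of a polynomial. -/
def pgrad {n : ℕ} (g : MvPolynomial (Fin n) ℝ) (u : Rn n) : Fin n → ℝ :=
  fun i => MvPolynomial.eval (fun j => u j) (MvPolynomial.pderiv i g)

/-- The Hessian `∇²g(u)` of a polynomial. -/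
def phess {n : ℕ} (g : MvPolynomial (Fin n) ℝ) (u : Rn n) : Matrix (Fin n) (Fin n) ℝ :=
  Matrix.of fun i j =>
    MvPolynomial.eval (fun k => u k) (MvPolynomial.pderiv i (MvPolynomial.pderiv j g))

/-- A polynomial `g` is sos-concave if `-∇²g(x) = W(x)ᵀ W(x)` for some
(possibly nonsquare) matrix polynomial `W`. -/
def SosConcave {n : ℕ} (g : MvPolynomial (Fin n) ℝ) : Prop :=
  ∃ (k : ℕ) (W : Fin k → Fin n → MvPolynomial (Fin n) ℝ),
    ∀ i j, - MvPolynomial.pderiv i (MvPolynomial.pderiv j g) = ∑ l, W l i * W l j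

/-- `g` is quasi-concave at `u` : `-vᵀ∇²g(u)v ≥ 0` for every `v` with `∇g(u)ᵀv = 0`. -/
def QuasiConcaveAt {n : ℕ} (g : MvPolynomial (Fin n) ℝ) (u : Rn n) : Prop :=
  ∀ v : Fin n → ℝ, (∑ i, pgrad g u i * v i) = 0 →
    0 ≤ -(∑ i, ∑ j, v i * phess g u i j * v j)

/-- `g` is strictly quasi-concave at `u` : if `∇g(u) ≠ 0` then `-vᵀ∇²g(u)v > 0`
for all nonzero `v ⊥ ∇g(u)`; if `∇g(u) = 0` then `-∇²g(u)` is positive definite. -/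
def StrictlyQuasiConcaveAt {n : ℕ} (g : MvPolynomial (Fin n) ℝ) (u : Rn n) : Prop :=
  (pgrad g u ≠ 0 ∧ ∀ v : Fin n → ℝ, v ≠ 0 → (∑ i, pgrad g u i * v i) = 0 →
      0 < -(∑ i, ∑ j, v i * phess g u i j * v j)) ∨
  (pgrad g u = 0 ∧ (-(phess g u)).PosDef)

/-- The convex boundary `∂_c T` : points of `T` minimizing some unit linear functional. -/
def convexBoundary {n : ℕ} (T : Set (Rn n)) : Set (Rn n) :=
  {u ∈ T | ∃ l : Rn n, ‖l‖ = 1 ∧ ∀ x ∈ T, (∑ i, l i * u i) ≤ ∑ i, l i * x i}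

/-- `v` is a nonsingular point of `∂T` (w.r.t. defining polynomials `g`):
exactly one defining polynomial vanishes at `v`, with nonvanishing gradient. -/
def IsNonsingularBoundaryPoint {n m : ℕ} (g : Fin m → MvPolynomial (Fin n) ℝ)
    (T : Set (Rn n)) (v : Rn n) : Prop :=
  v ∈ frontier T ∧ ∃ i, peval (g i) v = 0 ∧ pgrad (g i) v ≠ 0 ∧
    ∀ j, peval (g j) v = 0 → j = i

/-- A polynomial is SOS if it is a finite sum of squares of polynomials. -/
def IsSOSPoly {n : ℕ} (p : MvPolynomial (Fin n) ℝ) : Prop :=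
  ∃ (k : ℕ) (q : Fin k → MvPolynomial (Fin n) ℝ), p = ∑ i, (q i) ^ 2

/-- The polynomial `δ² - ‖x - u‖²`. -/
def ballPoly {n : ℕ} (u : Rn n) (δ : ℝ) : MvPolynomial (Fin n) ℝ :=
  MvPolynomial.C (δ ^ 2) - ∑ i, (MvPolynomial.X i - MvPolynomial.C (u i)) ^ 2

/-- The family `h₁, …, h_{m₂}` extended by the ball polynomial `h_m(x) = δ² - ‖x-u‖²`. -/
def extFamily {n m2 : ℕ} (h : Fin m2 → MvPolynomial (Fin n) ℝ) (u : Rn n) (δ : ℝ) :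
    Fin (m2 + 1) → MvPolynomial (Fin n) ℝ :=
  Fin.snoc h (ballPoly u δ)

/-- The positive definite Lagrange Hessian (PDLH) condition at `u` with radius `δu`,
for the set `T = {x | f(x) = 0, h(x) ≥ 0}`. -/
def PDLHAt {n m1 m2 : ℕ} (f : Fin m1 → MvPolynomial (Fin n) ℝ)
    (h : Fin m2 → MvPolynomial (Fin n) ℝ) (T : Set (Rn n)) (u : Rn n) (δu : ℝ) : Prop :=
  ∀ l : Rn n, ‖l‖ = 1 → ∀ δ : ℝ, 0 < δ → δ ≤ δu →
    ∀ v ∈ T ∩ closedBall u δ,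
      (∀ x ∈ T ∩ closedBall u δ, (∑ i, l i * v i) ≤ ∑ i, l i * x i) →
      ∃ (lam : Fin m1 → ℝ) (mu : Fin (m2 + 1) → ℝ),
        (∀ j, 0 ≤ mu j) ∧
        (∀ j, mu j * peval (extFamily h u δ j) v = 0) ∧
        (∀ i, l i = (∑ k, lam k * pgrad (f k) v i) +
            ∑ j, mu j * pgrad (extFamily h u δ j) v i) ∧
        ∀ x ∈ closedBall u δ,
          (Matrix.of (fun i i' : Fin n =>
            -(∑ k, lam k * phess (f k) x i i') -
              ∑ j, mu j * phess (extFamily h u δ j) x i i')).PosDef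

/-- `Z(g) ∩ ∂S` has strictly convex shape with respect to `S`. -/
def StrictlyConvexShape {n : ℕ} (g : MvPolynomial (Fin n) ℝ) (S : Set (Rn n)) : Prop :=
  ∃ Y U : Set (Rn n), IsOpen U ∧ Y = {x | peval g x = 0} ∩ U ∧
    {x | peval g x = 0} ∩ frontier S ⊆ Y ∧
    (∀ p ∈ closure Y, pgrad g p ≠ 0) ∧
    ∀ p ∈ closure Y,
      (∃ ε : ℝ, (ε = 1 ∨ ε = -1) ∧
        ∀ q ∈ S ∪ closure Y, ε * (∑ i, pgrad g p i * (q i - p i)) ≤ 0) ∧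
      ∀ q ∈ S ∪ closure Y, (∑ i, pgrad g p i * (q i - p i)) = 0 → q = p

/-! ### Semidefinite representable cones -/

/-- `K` is the projection of a linear (homogeneous) matrix inequality. -/
def KRep {Z : Type} [AddCommGroup Z] [Module ℝ Z] (K : Set Z) : Prop :=
  ∃ (E : Type) (_ : AddCommGroup E) (_ : Module ℝ E) (ι : Type) (_ : Fintype ι)
    (Φ : Z × E →ₗ[ℝ] Matrix ι ι ℝ),
    (∀ z, (Φ z).IsSymm) ∧ K = {z | ∃ u, (Φ (z, u)).PosSemidef}

lemma posSemidef_iff_sum {ι : Type} [Fintype ι] {M : Matrix ι ι ℝ} (hM : M.IsSymm) :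
    M.PosSemidef ↔ ∀ v : ι → ℝ, 0 ≤ ∑ i, ∑ j, v i * M i j * v j := by
  rw [Matrix.posSemidef_iff_dotProduct_mulVec]
  have key : ∀ v : ι → ℝ, star v ⬝ᵥ (M.mulVec v) = ∑ i, ∑ j, v i * M i j * v j := by
    intro v
    simp only [dotProduct, Matrix.mulVec, Finset.mul_sum, star_trivial]
    exact Finset.sum_congr rfl fun i _ => Finset.sum_congr rfl fun j _ => by ring
  simp only [key]
  constructor
  · exact fun h => h.2
  · intro h
    refine ⟨?_, h⟩
    rw [Matrix.IsHermitian, Matrix.conjTranspose_eq_transpose_of_trivial]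
    exact hM

section KRep
variable {Z Z' : Type} [AddCommGroup Z] [Module ℝ Z] [AddCommGroup Z'] [Module ℝ Z']

lemma KRep.zero_mem {K : Set Z} (h : KRep K) : (0 : Z) ∈ K := by
  obtain ⟨E, _, _, ι, _, Φ, hs, rfl⟩ := h
  refine ⟨0, ?_⟩
  have : Φ ((0 : Z), (0 : E)) = 0 := Φ.map_zero
  rw [this]; exact Matrix.PosSemidef.zero

lemma KRep.add_mem {K : Set Z} (h : KRep K) {x y : Z} (hx : x ∈ K) (hy : y ∈ K) :
    x + y ∈ K := by
  obtain ⟨E, _, _, ι, _, Φ, hs, rfl⟩ := h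
  obtain ⟨u, hu⟩ := hx
  obtain ⟨v, hv⟩ := hy
  refine ⟨u + v, ?_⟩
  have : Φ (x + y, u + v) = Φ (x, u) + Φ (y, v) := by rw [← Φ.map_add]; rfl
  rw [this]; exact hu.add hv

lemma KRep.smul_mem {K : Set Z} (h : KRep K) {x : Z} (hx : x ∈ K) {r : ℝ} (hr : 0 ≤ r) :
    r • x ∈ K := by
  obtain ⟨E, _, _, ι, _, Φ, hs, rfl⟩ := h
  obtain ⟨u, hu⟩ := hx
  refine ⟨r • u, ?_⟩
  have : Φ (r • x, r • u) = r • Φ (x, u) := by rw [← Φ.map_smul]; rfl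
  rw [this]; exact hu.smul hr

lemma KRep.preimage {K : Set Z} (h : KRep K) (f : Z' →ₗ[ℝ] Z) : KRep (f ⁻¹' K) := by
  obtain ⟨E, _, _, ι, _, Φ, hs, rfl⟩ := h
  exact ⟨E, inferInstance, inferInstance, ι, inferInstance, Φ ∘ₗ (f.prodMap LinearMap.id), fun z => hs _, rfl⟩

lemma KRep.proj {K : Set (Z × Z')} (h : KRep K) : KRep {z | ∃ w, (z, w) ∈ K} := by
  obtain ⟨E, _, _, ι, _, Φ, hs, rfl⟩ := h
  refine ⟨Z' × E, inferInstance, inferInstance, ι, inferInstance, Φ ∘ₗ (LinearEquiv.prodAssoc ℝ Z Z' E).symm.toLinearMap,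
    fun z => hs _, ?_⟩
  ext z
  constructor
  · rintro ⟨w, u, hu⟩; exact ⟨(w, u), hu⟩
  · rintro ⟨⟨w, u⟩, hu⟩; exact ⟨w, u, hu⟩

lemma fromBlocks_posSemidef_iff {ι κ : Type} [Fintype ι] [Fintype κ] {A : Matrix ι ι ℝ}
    {B : Matrix κ κ ℝ} (hA : A.IsSymm) (hB : B.IsSymm) :
    (Matrix.fromBlocks A 0 0 B).PosSemidef ↔ A.PosSemidef ∧ B.PosSemidef := by
  rw [posSemidef_iff_sum, posSemidef_iff_sum hA, posSemidef_iff_sum hB]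
  · simp only [Fintype.sum_sum_type, Matrix.fromBlocks_apply₁₁, Matrix.fromBlocks_apply₁₂,
      Matrix.fromBlocks_apply₂₁, Matrix.fromBlocks_apply₂₂, Matrix.zero_apply, mul_zero, zero_mul,
      Finset.sum_const_zero, add_zero, zero_add]
    constructor
    · intro h
      exact ⟨fun v => by simpa using h (Sum.elim v 0), fun v => by simpa using h (Sum.elim 0 v)⟩
    · rintro ⟨h1, h2⟩ v
      exact add_nonneg (h1 fun i => v (Sum.inl i)) (h2 fun i => v (Sum.inr i))
  · exact Matrix.IsSymm.fromBlocks hA (by simp) hB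

/-- block-diagonal matrices as a linear map -/
def blockLin (ι κ : Type) [Fintype ι] [Fintype κ] :
    Matrix ι ι ℝ × Matrix κ κ ℝ →ₗ[ℝ] Matrix (ι ⊕ κ) (ι ⊕ κ) ℝ where
  toFun p := Matrix.fromBlocks p.1 0 0 p.2
  map_add' p q := by simp [Matrix.fromBlocks_add]
  map_smul' r p := by simp [Matrix.fromBlocks_smul]

lemma KRep.inter {K K' : Set Z} (h : KRep K) (h' : KRep K') : KRep (K ∩ K') := by
  obtain ⟨E, _, _, ι, _, Φ, hs, rfl⟩ := h
  obtain ⟨E', _, _, ι', _, Φ', hs', rfl⟩ := h'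
  refine ⟨E × E', inferInstance, inferInstance, ι ⊕ ι', inferInstance,
    blockLin ι ι' ∘ₗ LinearMap.prod
      (Φ ∘ₗ LinearMap.prodMap LinearMap.id (LinearMap.fst ℝ E E'))
      (Φ' ∘ₗ LinearMap.prodMap LinearMap.id (LinearMap.snd ℝ E E')), ?_, ?_⟩
  · intro z
    exact Matrix.IsSymm.fromBlocks (hs _) (by simp) (hs' _)
  · ext z
    constructor
    · rintro ⟨⟨u, hu⟩, ⟨u', hu'⟩⟩
      exact ⟨(u, u'), (fromBlocks_posSemidef_iff (hs _) (hs' _)).2 ⟨hu, hu'⟩⟩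
    · rintro ⟨⟨u, u'⟩, hu⟩
      have := (fromBlocks_posSemidef_iff (hs _) (hs' _)).1 hu
      exact ⟨⟨u, this.1⟩, ⟨u', this.2⟩⟩

lemma KRep.univ : KRep (Set.univ : Set Z) := by
  refine ⟨PUnit, inferInstance, inferInstance, PUnit, inferInstance, 0, fun z => by simp, ?_⟩
  ext z
  simp [Matrix.PosSemidef.zero]

lemma KRep.iInter {σ : Type} (t : Finset σ) {K : σ → Set Z} (h : ∀ i ∈ t, KRep (K i)) :
    KRep {z | ∀ i ∈ t, z ∈ K i} := by
  classical
  induction t using Finset.induction_on with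
  | empty => simpa using (KRep.univ : KRep (Set.univ : Set Z))
  | insert a t ha ih =>
    have h1 := (h a (by simp)).inter (ih fun i hi => h i (by simp [hi]))
    convert h1 using 1
    ext z; simp

/-- sums of squares constraints -/
lemma KRep.gram {P : Type} [CommRing P] [Algebra ℝ P] (U : Submodule ℝ P) [Module.Finite ℝ U]
    (b : P) : KRep {L : P →ₗ[ℝ] ℝ | ∀ q ∈ U, 0 ≤ L (b * q * q)} := by
  let e := Module.finBasis ℝ U
  refine ⟨PUnit, inferInstance, inferInstance, Fin (Module.finrank ℝ U), inferInstance,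
    { toFun := fun z => Matrix.of fun i j => z.1 (b * (e i : P) * (e j : P))
      map_add' := fun x y => by ext i j; simp
      map_smul' := fun r x => by ext i j; simp }, ?_, ?_⟩
  · intro z
    ext i j
    simp only [LinearMap.coe_mk, AddHom.coe_mk, Matrix.transpose_apply, Matrix.of_apply]
    congr 1; ring
  · have key : ∀ (L : P →ₗ[ℝ] ℝ) (v : Fin (Module.finrank ℝ U) → ℝ),
        ∑ i, ∑ j, v i * L (b * (e i : P) * (e j : P)) * v j =
          L (b * ((∑ i, v i • e i : U) : P) * ((∑ i, v i • e i : U) : P)) := by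
      intro L v
      simp only [Submodule.coe_sum, Submodule.coe_smul, Finset.mul_sum, Finset.sum_mul, map_sum]
      rw [Finset.sum_comm]
      refine Finset.sum_congr rfl fun i _ => Finset.sum_congr rfl fun j _ => ?_
      rw [mul_smul_comm, mul_smul_comm, smul_mul_assoc, map_smul, map_smul, smul_eq_mul,
        smul_eq_mul]
      ring
    ext L
    simp only [Set.mem_ofPred_eq]
    have hsymm : (Matrix.of fun i j => L (b * (e i : P) * (e j : P))).IsSymm := by
      ext i j
      simp only [Matrix.transpose_apply, Matrix.of_apply]
      congr 1; ring
    constructor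
    · intro h
      refine ⟨PUnit.unit, ?_⟩
      refine (posSemidef_iff_sum hsymm).2 fun v => ?_
      simp only [Matrix.of_apply]
      rw [key]
      exact h _ (Subtype.property _)
    · rintro ⟨_, h⟩ q hq
      have := (posSemidef_iff_sum hsymm).1 h (e.repr ⟨q, hq⟩)
      simp only [Matrix.of_apply] at this
      rw [key, e.sum_repr] at this
      exact this

lemma KRep.nonneg (f : Z →ₗ[ℝ] ℝ) : KRep {z | 0 ≤ f z} := by
  refine ⟨PUnit, inferInstance, inferInstance, PUnit, inferInstance,
    { toFun := fun z => Matrix.of fun i j => f z.1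
      map_add' := fun x y => by ext i j; simp
      map_smul' := fun r x => by ext i j; simp }, fun z => rfl, ?_⟩
  ext z
  simp only [Set.mem_ofPred_eq]
  have hsymm : (Matrix.of fun (i j : PUnit) => f z).IsSymm := rfl
  constructor
  · intro h
    refine ⟨PUnit.unit, (posSemidef_iff_sum hsymm).2 fun v => ?_⟩
    simp only [Matrix.of_apply, Finset.univ_unique, Finset.sum_singleton]
    nlinarith [mul_nonneg (mul_self_nonneg (v default)) h]
  · rintro ⟨_, h⟩
    simpa using (posSemidef_iff_sum hsymm).1 h fun _ => 1

lemma KRep.eqZero (f : Z →ₗ[ℝ] ℝ) : KRep {z | f z = 0} := by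
  have := (KRep.nonneg f).inter (KRep.nonneg (-f))
  convert this using 1
  ext z
  simp only [Set.mem_ofPred_eq, Set.mem_inter_iff, LinearMap.neg_apply]
  constructor
  · intro h; simp [h]
  · rintro ⟨h1, h2⟩; linarith

end KRep

/-- `C` is an affine slice of a representable cone. -/
def SRep {V : Type} [AddCommGroup V] [Module ℝ V] (C : Set V) : Prop :=
  ∃ K : Set (ℝ × V), KRep K ∧ C = {x | ((1 : ℝ), x) ∈ K}

section SRepSec
variable {V : Type} [AddCommGroup V] [Module ℝ V]

lemma SRep.univ : SRep (Set.univ : Set V) := ⟨Set.univ, KRep.univ, by simp⟩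

lemma SRep.inter {C D : Set V} (h : SRep C) (h' : SRep D) : SRep (C ∩ D) := by
  obtain ⟨K, hK, rfl⟩ := h
  obtain ⟨K', hK', rfl⟩ := h'
  exact ⟨K ∩ K', hK.inter hK', rfl⟩

lemma SRep.iInter {σ : Type} [Fintype σ] {C : σ → Set V} (h : ∀ i, SRep (C i)) :
    SRep {z | ∀ i, z ∈ C i} := by
  choose K hK hC using h
  refine ⟨_, KRep.iInter Finset.univ (fun i _ => hK i), ?_⟩
  ext z
  simp only [Set.mem_ofPred_eq, Finset.mem_univ, true_imp_iff]
  refine forall_congr' fun i => ?_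
  rw [hC i]; rfl

lemma SRep.affine (a : ℝ) (f : V →ₗ[ℝ] ℝ) : SRep {z | 0 ≤ a + f z} := by
  refine ⟨_, KRep.nonneg (a • LinearMap.fst ℝ ℝ V + f ∘ₗ LinearMap.snd ℝ ℝ V), ?_⟩
  ext z; simp

end SRepSec

lemma SRep.hull {n : ℕ} {S C D : Set (Fin n → ℝ)} (hS : Convex ℝ S) (hb : Bornology.IsBounded S)
    (hC : SRep C) (hD : SRep D) (hCS : C ⊆ S) (hDS : D ⊆ S) :
    ∃ R, SRep R ∧ C ⊆ R ∧ D ⊆ R ∧ R ⊆ S := by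
  rcases C.eq_empty_or_nonempty with rfl | hCn
  · exact ⟨D, hD, by simp, subset_rfl, hDS⟩
  rcases D.eq_empty_or_nonempty with rfl | hDn
  · exact ⟨C, hC, subset_rfl, by simp, hCS⟩
  have rec0 : ∀ {K : Set (ℝ × (Fin n → ℝ))}, KRep K → {x | ((1 : ℝ), x) ∈ K}.Nonempty →
      {x | ((1 : ℝ), x) ∈ K} ⊆ S → ∀ y, ((0 : ℝ), y) ∈ K → y = 0 := by
    intro K hK hne hsub y hy
    obtain ⟨x, hx⟩ := hne
    by_contra hy0
    obtain ⟨R, hR⟩ := hb.exists_norm_le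
    have h1 : ∀ t : ℝ, 0 ≤ t → ‖x + t • y‖ ≤ R := by
      intro t ht
      apply hR; apply hsub
      have := hK.add_mem hx (hK.smul_mem hy ht)
      simpa using this
    have hpos : 0 < ‖y‖ := norm_pos_iff.2 hy0
    have hR0 : 0 ≤ R := (norm_nonneg _).trans (h1 0 le_rfl)
    have ht : 0 ≤ (R + ‖x‖ + 1) / ‖y‖ := by positivity
    have h2 := h1 _ ht
    have h3 : ‖((R + ‖x‖ + 1) / ‖y‖) • y‖ = R + ‖x‖ + 1 := by
      rw [norm_smul, Real.norm_of_nonneg ht]; field_simp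
    have h4 := norm_sub_le (x + ((R + ‖x‖ + 1) / ‖y‖) • y) x
    rw [add_sub_cancel_left, h3] at h4
    linarith
  obtain ⟨K, hK, rfl⟩ := hC
  obtain ⟨K', hK', rfl⟩ := hD
  let V := Fin n → ℝ
  have hR : KRep {z : ℝ × V | ∃ w : ℝ × V, (z, w) ∈
      {p : (ℝ × V) × (ℝ × V) | p.2 ∈ K} ∩ ({p | p.1 - p.2 ∈ K'} ∩
        ({p | 0 ≤ p.2.1} ∩ {p | 0 ≤ p.1.1 - p.2.1}))} := by
    apply KRep.proj
    refine (hK.preimage (LinearMap.snd ℝ (ℝ × V) (ℝ × V))).inter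
      ((hK'.preimage (LinearMap.fst ℝ (ℝ × V) (ℝ × V) - LinearMap.snd ℝ (ℝ × V) (ℝ × V))).inter
      ((KRep.nonneg (LinearMap.fst ℝ ℝ V ∘ₗ LinearMap.snd ℝ (ℝ × V) (ℝ × V))).inter
      (KRep.nonneg (LinearMap.fst ℝ ℝ V ∘ₗ LinearMap.fst ℝ (ℝ × V) (ℝ × V) -
        LinearMap.fst ℝ ℝ V ∘ₗ LinearMap.snd ℝ (ℝ × V) (ℝ × V)))))
  refine ⟨_, ⟨_, hR, rfl⟩, ?_, ?_, ?_⟩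
  · intro x hx
    refine ⟨(1, x), hx, ?_, ?_, ?_⟩
    · simpa using hK'.zero_mem
    · simp
    · simp
  · intro x hx
    refine ⟨(0, 0), hK.zero_mem, ?_, ?_, ?_⟩
    · simpa using hx
    · simp
    · simp
  · rintro x ⟨⟨l, y⟩, h1, h2, h3, h4⟩
    simp only [Set.mem_ofPred_eq, Prod.mk_sub_mk] at h1 h2 h3 h4
    rcases h3.eq_or_lt with rfl | hl
    · have hy := rec0 hK hCn hCS y h1
      subst hy
      apply hDS; simpa using h2
    rcases h4.eq_or_lt with h4 | h4
    · rw [← h4] at h2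
      have hy := rec0 hK' hDn hDS _ h2
      apply hCS
      have : x = y := sub_eq_zero.1 hy
      subst this
      have : l = 1 := by linarith
      subst this
      exact h1
    · have e1 : l⁻¹ • y ∈ S := by
        apply hCS
        have := hK.smul_mem h1 (inv_nonneg.2 hl.le)
        simpa [hl.ne'] using this
      have e2 : (1 - l)⁻¹ • (x - y) ∈ S := by
        apply hDS
        have := hK'.smul_mem h2 (inv_nonneg.2 h4.le)
        simpa [h4.ne'] using this
      have := hS e1 e2 hl.le h4.le (by ring)
      rw [smul_inv_smul₀ hl.ne', smul_inv_smul₀ h4.ne', add_sub_cancel] at this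
      exact this

lemma SRep.isSDP {n : ℕ} {S : Set (Rn n)} {C : Set (Fin n → ℝ)} (hC : SRep C)
    (h : ∀ x : Rn n, x ∈ S ↔ (fun i => x i) ∈ C) : IsSDPRepresentable S := by
  classical
  obtain ⟨K, ⟨E, _, _, ι, _, Φ, hs, rfl⟩, rfl⟩ := hC
  let Ψ : E →ₗ[ℝ] Matrix ι ι ℝ := Φ ∘ₗ LinearMap.inr ℝ (ℝ × (Fin n → ℝ)) E
  let bas := Module.finBasis ℝ (LinearMap.range Ψ)
  let e := Fintype.equivFin ι
  have hsub : ∀ M : Matrix ι ι ℝ, M.IsSymm → (M.submatrix e.symm e.symm).IsSymm :=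
    fun M hM => hM.submatrix _
  refine ⟨Module.finrank ℝ (LinearMap.range Ψ), Fintype.card ι,
    (Φ ((1, 0), 0)).submatrix e.symm e.symm,
    fun i => (Φ ((0, Pi.single i 1), 0)).submatrix e.symm e.symm,
    fun j => (bas j : Matrix ι ι ℝ).submatrix e.symm e.symm, hsub _ (hs _),
    fun i => hsub _ (hs _), fun j => hsub _ ?_, ?_⟩
  · obtain ⟨u, hu⟩ := (bas j).2
    rw [← hu]; exact hs _
  · ext x
    rw [h]
    simp only [Set.mem_ofPred_eq]
    have hsum : ∀ (w : Fin (Module.finrank ℝ (LinearMap.range Ψ)) → ℝ) (u : E),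
        ((∑ j, w j • bas j : LinearMap.range Ψ) : Matrix ι ι ℝ) = Ψ u →
        (Φ ((1, 0), 0)).submatrix e.symm e.symm
          + ∑ i, x i • (Φ ((0, Pi.single i 1), 0)).submatrix e.symm e.symm
          + ∑ j, w j • (bas j : Matrix ι ι ℝ).submatrix e.symm e.symm
          = (Φ ((1, fun i => x i), u)).submatrix e.symm e.symm := by
      intro w u hwu
      have hdec : (((1 : ℝ), fun i => x i), u) =
          (((1 : ℝ), (0 : Fin n → ℝ)), (0 : E)) +
          ∑ i, x i • (((0 : ℝ), (Pi.single i 1 : Fin n → ℝ)), (0 : E)) +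
          (LinearMap.inr ℝ (ℝ × (Fin n → ℝ)) E) u := by
        refine Prod.ext (Prod.ext ?_ ?_) ?_
        · simp [Prod.fst_sum]
        · ext k
          simp [Prod.snd_sum, Prod.fst_sum, Finset.sum_apply, Pi.single_apply]
        · simp [Prod.snd_sum]
      rw [hdec]
      simp only [map_add, map_sum, map_smul]
      change _ = (_ + _ + Ψ u).submatrix _ _
      rw [← hwu]
      ext a b
      simp [Matrix.sum_apply]
    constructor
    · rintro ⟨u, hu⟩
      refine ⟨bas.repr ⟨Ψ u, u, rfl⟩, ?_⟩
      rw [hsum _ u (by rw [bas.sum_repr])]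
      exact hu.submatrix _
    · rintro ⟨w, hw⟩
      obtain ⟨u, hu⟩ := (∑ j, w j • bas j : LinearMap.range Ψ).2
      refine ⟨u, ?_⟩
      rw [hsum w u hu.symm] at hw
      exact (Matrix.posSemidef_submatrix_equiv e.symm).1 hw

/-! ### Moment relaxations and the Jensen inequality -/

lemma totalDegree_aeval_le_of_le_one {n : ℕ} (z : Fin n → MvPolynomial (Fin n) ℝ)
    (hz : ∀ i, (z i).totalDegree ≤ 1) (p : MvPolynomial (Fin n) ℝ) :
    (aeval z p).totalDegree ≤ p.totalDegree := by
  rw [aeval_def, eval₂_eq']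
  refine totalDegree_finsetSum_le fun m hm => ?_
  refine (totalDegree_mul _ _).trans ?_
  rw [MvPolynomial.algebraMap_eq, totalDegree_C, zero_add]
  refine (totalDegree_finsetProd _ _).trans ?_
  refine le_trans ?_ (le_totalDegree hm)
  rw [Finsupp.sum_fintype _ _ (fun _ => rfl)]
  refine Finset.sum_le_sum fun i _ => ?_
  refine (totalDegree_pow _ _).trans ?_
  nlinarith [hz i]

/-- the segment from `u` to the generic point -/
def zline {n : ℕ} (u : Fin n → ℝ) (s : ℝ) (i : Fin n) : MvPolynomial (Fin n) ℝ :=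
  C (u i) + C s * (X i - C (u i))

lemma totalDegree_X_sub_C_le {n : ℕ} (i : Fin n) (a : ℝ) :
    (X i - C a : MvPolynomial (Fin n) ℝ).totalDegree ≤ 1 := by
  refine (totalDegree_sub _ _).trans ?_
  simp

lemma totalDegree_zline {n : ℕ} (u : Fin n → ℝ) (s : ℝ) (i : Fin n) :
    (zline u s i).totalDegree ≤ 1 := by
  refine (totalDegree_add _ _).trans (max_le (by simp) ?_)
  refine (totalDegree_mul _ _).trans ?_
  rw [totalDegree_C, zero_add]
  exact totalDegree_X_sub_C_le _ _

lemma L_C_mul {n : ℕ} (L : MvPolynomial (Fin n) ℝ →ₗ[ℝ] ℝ) (a : ℝ) (q : MvPolynomial (Fin n) ℝ) :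
    L (C a * q) = a * L q := by
  rw [C_mul', map_smul, smul_eq_mul]

lemma hasDerivAt_zline {n : ℕ} (u : Fin n → ℝ) (p : MvPolynomial (Fin n) ℝ) :
    ∀ (L : MvPolynomial (Fin n) ℝ →ₗ[ℝ] ℝ) (s : ℝ),
    HasDerivAt (fun s => L (aeval (zline u s) p))
      (L (∑ i, (X i - C (u i)) * aeval (zline u s) (pderiv i p))) s := by
  induction p using MvPolynomial.induction_on with
  | C a =>
    intro L s
    simpa using hasDerivAt_const s (L (C a))
  | add p q hp hq =>
    intro L s
    have := (hp L s).add (hq L s)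
    refine HasDerivAt.congr_deriv (HasDerivAt.congr_of_eventuallyEq this ?_) ?_
    · exact Eventually.of_forall fun t => by simp
    · simp [mul_add, Finset.sum_add_distrib]
  | mul_X p k hp =>
    intro L s
    let L' : MvPolynomial (Fin n) ℝ →ₗ[ℝ] ℝ := L ∘ₗ LinearMap.mulLeft ℝ (X k - C (u k))
    have h1 := ((hp L s).const_mul (u k)).add ((hasDerivAt_id s).mul (hp L' s))
    refine HasDerivAt.congr_deriv (HasDerivAt.congr_of_eventuallyEq h1 ?_) ?_
    · refine Eventually.of_forall fun t => ?_
      have : aeval (zline u t) (p * X k) = C (u k) * aeval (zline u t) p +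
          C t * ((X k - C (u k)) * aeval (zline u t) p) := by
        rw [map_mul, aeval_X, zline]; ring
      simp only [this, map_add, L_C_mul]
      rfl
    · have hsum : ∑ i, (X i - C (u i)) * aeval (zline u s) (pderiv i (p * X k)) =
          C (u k) * (∑ i, (X i - C (u i)) * aeval (zline u s) (pderiv i p)) +
          (X k - C (u k)) * aeval (zline u s) p +
          C s * ((X k - C (u k)) * ∑ i, (X i - C (u i)) * aeval (zline u s) (pderiv i p)) := by
        have h2 : ∀ i, (X i - C (u i)) * aeval (zline u s) (pderiv i (p * X k)) =
            zline u s k * ((X i - C (u i)) * aeval (zline u s) (pderiv i p)) +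
            (if i = k then (X k - C (u k)) * aeval (zline u s) p else 0) := by
          intro i
          rw [pderiv_mul, map_add, map_mul, map_mul, aeval_X]
          by_cases hik : i = k
          · subst hik
            rw [pderiv_X_self, map_one, if_pos rfl]; ring
          · rw [pderiv_X_of_ne (fun h => hik h.symm), map_zero, if_neg hik]; ring
        rw [Finset.sum_congr rfl fun i _ => h2 i, Finset.sum_add_distrib, ← Finset.mul_sum,
          Finset.sum_ite_eq' Finset.univ k, if_pos (Finset.mem_univ _), zline]
        ring
      rw [hsum]
      simp only [map_add, L_C_mul]
      simp only [L', LinearMap.comp_apply, LinearMap.mulLeft_apply, id]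
      ring

lemma jensen {n : ℕ} (u : Fin n → ℝ) (p : MvPolynomial (Fin n) ℝ)
    (L : MvPolynomial (Fin n) ℝ →ₗ[ℝ] ℝ) (h1 : L 1 = 1) (hX : ∀ i, L (X i) = u i)
    (h2 : ∀ s ∈ Set.Icc (0 : ℝ) 1, L (∑ i, ∑ j, (X i - C (u i)) * (X j - C (u j)) *
      aeval (zline u s) (pderiv j (pderiv i p))) ≤ 0) :
    L p ≤ eval u p := by
  have hC : ∀ a, L (C a) = a := fun a => by
    have := L_C_mul L a 1
    rwa [mul_one, h1, mul_one] at this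
  let φ : ℝ → ℝ := fun s => L (aeval (zline u s) p)
  let φ' : ℝ → ℝ := fun s => L (∑ i, (X i - C (u i)) * aeval (zline u s) (pderiv i p))
  let φ'' : ℝ → ℝ := fun s => L (∑ i, ∑ j, (X i - C (u i)) * (X j - C (u j)) *
      aeval (zline u s) (pderiv j (pderiv i p)))
  have hφ : ∀ s, HasDerivAt φ (φ' s) s := hasDerivAt_zline u p L
  have hφ' : ∀ s, HasDerivAt φ' (φ'' s) s := by
    intro s
    have := HasDerivAt.fun_sum (u := Finset.univ) fun i (_ : i ∈ Finset.univ) =>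
      hasDerivAt_zline u (pderiv i p) (L ∘ₗ LinearMap.mulLeft ℝ (X i - C (u i))) s
    refine HasDerivAt.congr_deriv (HasDerivAt.congr_of_eventuallyEq this ?_) ?_
    · exact Eventually.of_forall fun t => by simp [φ', map_sum]
    · simp only [φ'', map_sum, LinearMap.comp_apply, LinearMap.mulLeft_apply, mul_assoc]
  have hz0 : zline u 0 = fun i => C (u i) := by ext1 i; simp [zline]
  have hA0 : ∀ q : MvPolynomial (Fin n) ℝ, aeval (zline u 0) q = C (eval u q) := by
    intro q
    rw [hz0]
    have := (MvPolynomial.aeval_algebraMap_apply (MvPolynomial (Fin n) ℝ) u q)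
    rw [MvPolynomial.algebraMap_eq] at this
    simpa [Function.comp_def, MvPolynomial.aeval_eq_eval] using this
  have hz1 : zline u 1 = X := by ext1 i; simp [zline]
  have e0 : φ 0 = eval u p := by simp only [φ, hA0, hC]
  have e1 : φ 1 = L p := by simp only [φ, hz1]; simp
  have e2 : φ' 0 = 0 := by
    simp only [φ', hA0, map_sum]
    refine Finset.sum_eq_zero fun i _ => ?_
    rw [mul_comm, L_C_mul, map_sub, hX, hC]; ring
  have anti : AntitoneOn φ' (Set.Icc 0 1) := by
    refine antitoneOn_of_deriv_nonpos (convex_Icc _ _)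
      (fun s _ => (hφ' s).continuousAt.continuousWithinAt)
      (fun s _ => (hφ' s).differentiableAt.differentiableWithinAt) ?_
    intro s hs
    rw [(hφ' s).deriv]
    exact h2 s (interior_subset hs)
  obtain ⟨ξ, hξ, hm⟩ := exists_hasDerivAt_eq_slope φ φ' (zero_lt_one)
    (fun s _ => (hφ s).continuousAt.continuousWithinAt) (fun s _ => hφ s)
  have h3 := anti (by simp : (0 : ℝ) ∈ Set.Icc (0 : ℝ) 1) ⟨hξ.1.le, hξ.2.le⟩ hξ.1.le
  rw [e2, hm, e0, e1] at h3
  simp only [sub_zero, div_one] at h3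
  linarith

lemma momentRep {n k : ℕ} (p : MvPolynomial (Fin n) ℝ) (b : Fin k → MvPolynomial (Fin n) ℝ)
    (N : ℕ) : SRep {x : Fin n → ℝ | ∃ L : MvPolynomial (Fin n) ℝ →ₗ[ℝ] ℝ, L 1 = 1 ∧
      (∀ i, L (X i) = x i) ∧ 0 ≤ L p ∧ (∀ q, q.totalDegree ≤ N → 0 ≤ L (1 * q * q)) ∧
      ∀ j q, q.totalDegree ≤ N → 0 ≤ L (b j * q * q)} := by
  let P := MvPolynomial (Fin n) ℝ
  let V := Fin n → ℝ
  let Z := (ℝ × V) × (P →ₗ[ℝ] ℝ)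
  let sndL : Z →ₗ[ℝ] (P →ₗ[ℝ] ℝ) := LinearMap.snd ℝ _ _
  let ev : P → (Z →ₗ[ℝ] ℝ) := fun q => LinearMap.applyₗ q ∘ₗ sndL
  have hU : ∀ c : P, KRep {L : P →ₗ[ℝ] ℝ | ∀ q : P, q.totalDegree ≤ N → 0 ≤ L (c * q * q)} := by
    intro c
    have := KRep.gram (restrictTotalDegree (Fin n) ℝ N) c
    simpa only [mem_restrictTotalDegree] using this
  have h := ((KRep.eqZero (ev 1 - LinearMap.fst ℝ ℝ V ∘ₗ LinearMap.fst ℝ _ _)).inter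
    ((KRep.iInter Finset.univ (fun (i : Fin n) _ => KRep.eqZero (ev (X i) -
      LinearMap.proj i ∘ₗ LinearMap.snd ℝ ℝ V ∘ₗ LinearMap.fst ℝ _ _))).inter
    ((KRep.nonneg (ev p)).inter
    (((hU 1).preimage sndL).inter
    (KRep.iInter Finset.univ (fun (j : Fin k) _ => (hU (b j)).preimage sndL)))))).proj
  refine ⟨_, h, ?_⟩
  ext x
  constructor
  · rintro ⟨L, a1, a2, a3, a4, a5⟩
    exact ⟨L, sub_eq_zero.2 a1, fun i _ => sub_eq_zero.2 (a2 i), a3, a4, fun j _ => a5 j⟩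
  · rintro ⟨L, a1, a2, a3, a4, a5⟩
    exact ⟨L, sub_eq_zero.1 a1, fun i => sub_eq_zero.1 (a2 i (Finset.mem_univ _)), a3, a4,
      fun j => a5 j (Finset.mem_univ _)⟩

/-- `L` is nonnegative on squares of degree at most `N` and localized near `c` along `z`. -/
def Nice {n : ℕ} (c : Fin n → ℝ) (z : Fin n → MvPolynomial (Fin n) ℝ) (N : ℕ) (δ : ℝ)
    (L : MvPolynomial (Fin n) ℝ →ₗ[ℝ] ℝ) : Prop :=
  (∀ i, (z i).totalDegree ≤ 1) ∧ (∀ q, q.totalDegree ≤ N → 0 ≤ L (q ^ 2)) ∧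
    ∀ i q, q.totalDegree ≤ N → L ((z i - C (c i)) ^ 2 * q ^ 2) ≤ δ ^ 2 * L (q ^ 2)

lemma Nice.mono {n : ℕ} {c : Fin n → ℝ} {z : Fin n → MvPolynomial (Fin n) ℝ} {N N' : ℕ}
    {δ δ' : ℝ} {L : MvPolynomial (Fin n) ℝ →ₗ[ℝ] ℝ} (h : Nice c z N δ L) (hN : N' ≤ N)
    (hδ0 : 0 ≤ δ) (hδ : δ ≤ δ') : Nice c z N' δ' L := by
  refine ⟨h.1, fun q hq => h.2.1 q (hq.trans hN), fun i q hq => (h.2.2 i q (hq.trans hN)).trans ?_⟩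
  have := h.2.1 q (hq.trans hN)
  have h2 : δ ^ 2 ≤ δ' ^ 2 := pow_le_pow_left₀ hδ0 hδ 2
  nlinarith

lemma totalDegree_mul_le' {n : ℕ} {p q : MvPolynomial (Fin n) ℝ} {a b : ℕ}
    (hp : p.totalDegree ≤ a) (hq : q.totalDegree ≤ b) : (p * q).totalDegree ≤ a + b :=
  (totalDegree_mul _ _).trans (add_le_add hp hq)

lemma totalDegree_add_le' {n : ℕ} {p q : MvPolynomial (Fin n) ℝ} {a : ℕ}
    (hp : p.totalDegree ≤ a) (hq : q.totalDegree ≤ a) : (p + q).totalDegree ≤ a :=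
  (totalDegree_add _ _).trans (max_le hp hq)

lemma totalDegree_sub_le' {n : ℕ} {p q : MvPolynomial (Fin n) ℝ} {a : ℕ}
    (hp : p.totalDegree ≤ a) (hq : q.totalDegree ≤ a) : (p - q).totalDegree ≤ a :=
  (totalDegree_sub _ _).trans (max_le hp hq)

lemma totalDegree_dev {n : ℕ} (z : Fin n → MvPolynomial (Fin n) ℝ)
    (hz : ∀ i, (z i).totalDegree ≤ 1) (p : MvPolynomial (Fin n) ℝ) (a : ℝ) :
    (aeval z p - C a).totalDegree ≤ p.totalDegree :=
  totalDegree_sub_le' (totalDegree_aeval_le_of_le_one z hz p) (by simp)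

lemma Nice.close {n : ℕ} (c : Fin n → ℝ) (f : MvPolynomial (Fin n) ℝ) :
    ∀ (D : ℕ) (ε : ℝ), 0 < ε → ∃ (N : ℕ) (δ : ℝ), 0 < δ ∧
      ∀ (z : Fin n → MvPolynomial (Fin n) ℝ) (L : MvPolynomial (Fin n) ℝ →ₗ[ℝ] ℝ),
      Nice c z N δ L → ∀ a, a.totalDegree ≤ D →
        L ((aeval z f - C (eval c f)) ^ 2 * a ^ 2) ≤ ε * L (a ^ 2) := by
  induction f using MvPolynomial.induction_on with
  | C r =>
    intro D ε hε
    refine ⟨D, 1, one_pos, fun z L hL a ha => ?_⟩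
    have h0 := hL.2.1 a ha
    have : (aeval z (C r) - C (eval c (C r)) : MvPolynomial (Fin n) ℝ) = 0 := by simp
    rw [this]
    simp only [ne_eq, OfNat.ofNat_ne_zero, not_false_eq_true, zero_pow, zero_mul, map_zero]
    positivity
  | add f g hf hg =>
    intro D ε hε
    obtain ⟨N1, δ1, hδ1, h1⟩ := hf D (ε / 4) (by positivity)
    obtain ⟨N2, δ2, hδ2, h2⟩ := hg D (ε / 4) (by positivity)
    refine ⟨N1 + N2 + (f.totalDegree + g.totalDegree + D), min δ1 δ2, lt_min hδ1 hδ2,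
      fun z L hL a ha => ?_⟩
    have hm : 0 ≤ min δ1 δ2 := (lt_min hδ1 hδ2).le
    have e1 := h1 z L (hL.mono (by omega) hm (min_le_left _ _)) a ha
    have e2 := h2 z L (hL.mono (by omega) hm (min_le_right _ _)) a ha
    have d1 := totalDegree_dev z hL.1 f (eval c f)
    have d2 := totalDegree_dev z hL.1 g (eval c g)
    have hfg : (aeval z (f + g) - C (eval c (f + g)) : MvPolynomial (Fin n) ℝ) =
      (aeval z f - C (eval c f)) + (aeval z g - C (eval c g)) := by
      simp only [map_add]; ring
    rw [hfg]
    generalize (aeval z f - C (eval c f) : MvPolynomial (Fin n) ℝ) = F at *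
    generalize (aeval z g - C (eval c g) : MvPolynomial (Fin n) ℝ) = G at *
    have e3 := hL.2.1 ((F - G) * a) ((totalDegree_mul_le' (totalDegree_sub_le'
      (d1.trans (Nat.le_add_right _ g.totalDegree)) (d2.trans (Nat.le_add_left _ _))) ha).trans
      (by omega))
    have e4 : (F + G) ^ 2 * a ^ 2 = C 2 * (F ^ 2 * a ^ 2) + C 2 * (G ^ 2 * a ^ 2)
        - ((F - G) * a) ^ 2 := by
      have : (C 2 : MvPolynomial (Fin n) ℝ) = 2 := map_ofNat C 2
      rw [this]; ring
    rw [e4, map_sub, map_add, L_C_mul, L_C_mul]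
    linarith
  | mul_X f k hf =>
    intro D ε hε
    obtain ⟨N1, δ1, hδ1, h1⟩ := hf D (ε / (6 * (1 + c k ^ 2))) (by positivity)
    set r := eval c f with hr
    have hδ3 : 0 < ε / (6 * (1 + r ^ 2)) := by positivity
    set δ := min δ1 (min 1 (ε / (6 * (1 + r ^ 2)))) with hδ
    have hδp : 0 < δ := lt_min hδ1 (lt_min one_pos hδ3)
    refine ⟨N1 + (f.totalDegree + 1 + D), δ, hδp, fun z L hL a ha => ?_⟩
    have e1 := h1 z L (hL.mono (by omega) hδp.le (min_le_left _ _)) a ha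
    have d1 := totalDegree_dev z hL.1 f r
    have dY : (z k - C (c k)).totalDegree ≤ 1 := totalDegree_sub_le' (hL.1 k) (by simp)
    have hG : (aeval z (f * X k) - C (eval c (f * X k)) : MvPolynomial (Fin n) ℝ) =
      (aeval z f - C r) * (z k - C (c k)) + C (c k) * (aeval z f - C r) +
        C r * (z k - C (c k)) := by
      simp only [map_mul, aeval_X, eval_X, ← hr]; ring
    rw [hG]
    have eY := hL.2.2 k a (by omega)
    have eFY := hL.2.2 k ((aeval z f - C r) * a)
      ((totalDegree_mul_le' d1 ha).trans (by omega))
    generalize (aeval z f - C r : MvPolynomial (Fin n) ℝ) = F at *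
    generalize (z k - C (c k) : MvPolynomial (Fin n) ℝ) = Y at *
    have dFY : (F * Y).totalDegree ≤ f.totalDegree + 1 := totalDegree_mul_le' d1 dY
    have dcF : (C (c k) * F).totalDegree ≤ f.totalDegree + 1 :=
      (totalDegree_mul_le' (totalDegree_C _).le d1).trans (by omega)
    have drY : (C r * Y).totalDegree ≤ f.totalDegree + 1 :=
      (totalDegree_mul_le' (totalDegree_C _).le dY).trans (by omega)
    have s1 := hL.2.1 ((F * Y - C (c k) * F) * a)
      ((totalDegree_mul_le' (totalDegree_sub_le' dFY dcF) ha).trans (by omega))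
    have s2 := hL.2.1 ((F * Y - C r * Y) * a)
      ((totalDegree_mul_le' (totalDegree_sub_le' dFY drY) ha).trans (by omega))
    have s3 := hL.2.1 ((C (c k) * F - C r * Y) * a)
      ((totalDegree_mul_le' (totalDegree_sub_le' dcF drY) ha).trans (by omega))
    have s4 := hL.2.1 a (by omega)
    have s5 := hL.2.1 (F * a) ((totalDegree_mul_le' d1 ha).trans (by omega))
    have e4 : (F * Y + C (c k) * F + C r * Y) ^ 2 * a ^ 2 =
        C 3 * (Y ^ 2 * (F * a) ^ 2) + C (3 * c k ^ 2) * (F ^ 2 * a ^ 2) +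
        C (3 * r ^ 2) * (Y ^ 2 * a ^ 2) - ((F * Y - C (c k) * F) * a) ^ 2 -
        ((F * Y - C r * Y) * a) ^ 2 - ((C (c k) * F - C r * Y) * a) ^ 2 := by
      have : (C 3 : MvPolynomial (Fin n) ℝ) = 3 := map_ofNat C 3
      simp only [map_mul, map_pow, this]; ring
    rw [e4, map_sub, map_sub, map_sub, map_add, map_add, L_C_mul, L_C_mul, L_C_mul]
    rw [mul_pow] at s5 eFY
    have hd1 : δ ≤ 1 := (min_le_right _ _).trans (min_le_left _ _)
    have hd2 : δ ≤ ε / (6 * (1 + r ^ 2)) := (min_le_right _ _).trans (min_le_right _ _)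
    have hd3 : δ ^ 2 ≤ 1 := by nlinarith
    have hd4 : δ ^ 2 ≤ ε / (6 * (1 + r ^ 2)) := by nlinarith
    have b1 : L (Y ^ 2 * (F ^ 2 * a ^ 2)) ≤ L (F ^ 2 * a ^ 2) := by nlinarith
    have b2 : L (Y ^ 2 * a ^ 2) ≤ ε / (6 * (1 + r ^ 2)) * L (a ^ 2) :=
      eY.trans (mul_le_mul_of_nonneg_right hd4 s4)
    have b3 : 3 * (1 + c k ^ 2) * L (F ^ 2 * a ^ 2) ≤ ε / 2 * L (a ^ 2) := by
      have := mul_le_mul_of_nonneg_left e1 (by positivity : 0 ≤ 3 * (1 + c k ^ 2))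
      refine this.trans (le_of_eq ?_)
      field_simp; ring
    have b4 : 3 * r ^ 2 * L (Y ^ 2 * a ^ 2) ≤ ε / 2 * L (a ^ 2) := by
      have h5 := mul_le_mul_of_nonneg_left b2 (by positivity : 0 ≤ 3 * r ^ 2)
      refine h5.trans ?_
      rw [← mul_assoc]
      refine mul_le_mul_of_nonneg_right ?_ s4
      rw [← mul_div_assoc, div_le_div_iff₀ (by positivity) (by positivity)]
      nlinarith [sq_nonneg r]
    rw [mul_pow F a]
    nlinarith

lemma exists_pos_le {σ : Type} [Finite σ] (δ : σ → ℝ) (h : ∀ i, 0 < δ i) :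
    ∃ r, 0 < r ∧ ∀ i, r ≤ δ i := by
  rcases isEmpty_or_nonempty σ with hσ | hσ
  · exact ⟨1, one_pos, fun i => hσ.elim i⟩
  · obtain ⟨i, hi⟩ := Finite.exists_min δ
    exact ⟨δ i, h i, hi⟩

lemma pderiv_pderiv_swap {n : ℕ} (i j : Fin n) (p : MvPolynomial (Fin n) ℝ) :
    pderiv i (pderiv j p) = pderiv j (pderiv i p) := by
  have : ⁅(pderiv i : Derivation ℝ (MvPolynomial (Fin n) ℝ) (MvPolynomial (Fin n) ℝ)),
      (pderiv j : Derivation ℝ (MvPolynomial (Fin n) ℝ) (MvPolynomial (Fin n) ℝ))⁆ = 0 := by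
    apply MvPolynomial.derivation_ext
    intro k
    rw [Derivation.commutator_apply, pderiv_X, pderiv_X]
    have h1 : ∀ a b : Fin n, pderiv a (Pi.single (M := fun _ => MvPolynomial (Fin n) ℝ) b 1 k) = 0 := by
      intro a b
      rw [Pi.single_apply]
      split_ifs <;> simp
    simp [h1]
  have h2 := DFunLike.congr_fun this p
  rw [Derivation.commutator_apply] at h2
  exact sub_eq_zero.1 h2

open scoped MatrixOrder in
/-- real positive semidefinite forms are nonnegative under `L` -/
lemma L_psd {n : ℕ} (M : Matrix (Fin n) (Fin n) ℝ) (hM : M.IsSymm)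
    (h : ∀ v : Fin n → ℝ, 0 ≤ ∑ i, ∑ j, v i * M i j * v j)
    (L : MvPolynomial (Fin n) ℝ →ₗ[ℝ] ℝ) (N : ℕ)
    (hL : ∀ q, q.totalDegree ≤ N → 0 ≤ L (q ^ 2)) (Y : Fin n → MvPolynomial (Fin n) ℝ)
    (hY : ∀ i, (Y i).totalDegree ≤ N) : 0 ≤ ∑ i, ∑ j, M i j * L (Y i * Y j) := by
  have hps := (posSemidef_iff_sum hM).2 h
  obtain ⟨B, hB⟩ := (CStarAlgebra.nonneg_iff_eq_star_mul_self).1 hps.nonneg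
  have hent : ∀ i j, M i j = ∑ l, B l i * B l j := by
    intro i j
    rw [hB]
    simp [Matrix.mul_apply, Matrix.star_eq_conjTranspose]
  have key : ∑ i, ∑ j, M i j * L (Y i * Y j) = ∑ l, L ((∑ i, C (B l i) * Y i) ^ 2) := by
    have h1 : ∀ l, L ((∑ i, C (B l i) * Y i) ^ 2) =
        ∑ i, ∑ j, B l i * B l j * L (Y i * Y j) := by
      intro l
      rw [sq, Finset.sum_mul_sum, map_sum]
      refine Finset.sum_congr rfl fun i _ => ?_
      rw [map_sum]
      refine Finset.sum_congr rfl fun j _ => ?_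
      have : C (B l i) * Y i * (C (B l j) * Y j) = C (B l i * B l j) * (Y i * Y j) := by
        rw [map_mul]; ring
      rw [this, L_C_mul]
    simp only [h1, hent, Finset.sum_mul]
    conv_rhs => rw [Finset.sum_comm]
    refine Finset.sum_congr rfl fun i _ => ?_
    conv_rhs => rw [Finset.sum_comm]
  rw [key]
  refine Finset.sum_nonneg fun l _ => hL _ (totalDegree_finsetSum_le fun i _ => ?_)
  exact (totalDegree_mul_le' (totalDegree_C _).le (hY i)).trans (by omega)

/-- evaluation at a point as a linear functional -/
def evL {n : ℕ} (x : Fin n → ℝ) : MvPolynomial (Fin n) ℝ →ₗ[ℝ] ℝ :=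
  (aeval x : MvPolynomial (Fin n) ℝ →ₐ[ℝ] ℝ).toLinearMap

lemma evL_apply {n : ℕ} (x : Fin n → ℝ) (q : MvPolynomial (Fin n) ℝ) : evL x q = eval x q := by
  simp [evL, MvPolynomial.aeval_eq_eval]

lemma sosRep {n : ℕ} (p : MvPolynomial (Fin n) ℝ) (hp : SosConcave p) :
    SRep {x : Fin n → ℝ | 0 ≤ eval x p} := by
  obtain ⟨k, W, hW⟩ := hp
  let N := ∑ l, ∑ i, (W l i).totalDegree + 1
  have hWN : ∀ l i, (W l i).totalDegree + 1 ≤ N := by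
    intro l i
    have h1 : (W l i).totalDegree ≤ ∑ i, (W l i).totalDegree :=
      Finset.single_le_sum (f := fun i => (W l i).totalDegree) (fun _ _ => Nat.zero_le _)
        (Finset.mem_univ i)
    have h2 : ∑ i, (W l i).totalDegree ≤ ∑ l, ∑ i, (W l i).totalDegree :=
      Finset.single_le_sum (f := fun l => ∑ i, (W l i).totalDegree) (fun _ _ => Nat.zero_le _)
        (Finset.mem_univ l)
    simp only [N]; omega
  convert momentRep p (fun j : Fin 0 => 0) N using 1
  ext u
  constructor
  · intro hu
    refine ⟨evL u, ?_, ?_, ?_, ?_, fun j => j.elim0⟩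
    · simp [evL_apply]
    · simp [evL_apply]
    · rwa [evL_apply]
    · intro q _
      rw [evL_apply, one_mul, map_mul]; exact mul_self_nonneg _
  · rintro ⟨L, h1, hX, hp, hq, -⟩
    refine le_trans hp (jensen u p L h1 hX fun s _ => ?_)
    have key : ∑ i, ∑ j, (X i - C (u i)) * (X j - C (u j)) *
        aeval (zline u s) (pderiv j (pderiv i p)) =
        -∑ l, 1 * (∑ i, (X i - C (u i)) * aeval (zline u s) (W l i)) *
          (∑ i, (X i - C (u i)) * aeval (zline u s) (W l i)) := by
      have h2 : ∀ i j, pderiv j (pderiv i p) = -∑ l, W l j * W l i := by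
        intro i j; rw [← hW, neg_neg]
      have h3 : ∀ l, 1 * (∑ i, (X i - C (u i)) * aeval (zline u s) (W l i)) *
          (∑ i, (X i - C (u i)) * aeval (zline u s) (W l i)) =
          ∑ i, ∑ j, ((X i - C (u i)) * aeval (zline u s) (W l i)) *
            ((X j - C (u j)) * aeval (zline u s) (W l j)) := by
        intro l; rw [one_mul, Finset.sum_mul_sum]
      rw [Finset.sum_congr rfl fun l _ => h3 l]
      simp only [h2, map_neg, map_sum, map_mul, mul_neg,
        Finset.sum_neg_distrib, Finset.mul_sum]
      congr 1
      conv_rhs => rw [Finset.sum_comm]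
      refine Finset.sum_congr rfl fun i _ => ?_
      conv_rhs => rw [Finset.sum_comm]
      refine Finset.sum_congr rfl fun j _ => Finset.sum_congr rfl fun l _ => ?_
      ring
    rw [key, map_neg, map_sum, neg_nonpos]
    refine Finset.sum_nonneg fun l _ => hq _ (totalDegree_finsetSum_le fun i _ => ?_)
    refine (totalDegree_mul_le' (totalDegree_X_sub_C_le _ _)
      (totalDegree_aeval_le_of_le_one _ (totalDegree_zline u s) _)).trans ?_
    have := hWN l i; omega

lemma hessBound {n : ℕ} (p : MvPolynomial (Fin n) ℝ) (c : Fin n → ℝ) (κ : ℝ) (hκ : 0 < κ)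
    (h : ∀ v : Fin n → ℝ, ∑ i, ∑ j, v i * eval c (pderiv j (pderiv i p)) * v j ≤
      -(κ * ∑ i, v i ^ 2)) :
    ∃ (N : ℕ) (δ : ℝ), 0 < δ ∧ 1 ≤ N ∧
      ∀ (z : Fin n → MvPolynomial (Fin n) ℝ) (L : MvPolynomial (Fin n) ℝ →ₗ[ℝ] ℝ),
      Nice c z N δ L → ∀ Y : Fin n → MvPolynomial (Fin n) ℝ, (∀ i, (Y i).totalDegree ≤ 1) →
        L (∑ i, ∑ j, Y i * Y j * aeval z (pderiv j (pderiv i p))) ≤ 0 := by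
  classical
  set ε : ℝ := κ / (n + 1) with hε
  have hεp : 0 < ε := by positivity
  choose N δ hδ hN using fun i j : Fin n =>
    Nice.close c (pderiv j (pderiv i p)) 1 (ε ^ 2) (by positivity)
  obtain ⟨δ0, hδ0, hδle⟩ := exists_pos_le (fun ij : Fin n × Fin n => δ ij.1 ij.2)
    (fun ij => hδ _ _)
  let T := ∑ i, ∑ j, (N i j + (pderiv j (pderiv i p)).totalDegree) + 1
  have hT : ∀ i j, N i j + (pderiv j (pderiv i p)).totalDegree + 1 ≤ T := by
    intro i j
    have h1 : (N i j + (pderiv j (pderiv i p)).totalDegree) ≤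
        ∑ j, (N i j + (pderiv j (pderiv i p)).totalDegree) :=
      Finset.single_le_sum (f := fun j => N i j + (pderiv j (pderiv i p)).totalDegree)
        (fun _ _ => Nat.zero_le _) (Finset.mem_univ j)
    have h2 : ∑ j, (N i j + (pderiv j (pderiv i p)).totalDegree) ≤
        ∑ i, ∑ j, (N i j + (pderiv j (pderiv i p)).totalDegree) :=
      Finset.single_le_sum (f := fun i => ∑ j, (N i j + (pderiv j (pderiv i p)).totalDegree))
        (fun _ _ => Nat.zero_le _) (Finset.mem_univ i)
    simp only [T]; omega
  refine ⟨T, δ0, hδ0, by simp only [T]; omega, fun z L hL Y hY => ?_⟩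
  have hLT : ∀ q, q.totalDegree ≤ 1 → 0 ≤ L (q ^ 2) := fun q hq =>
    hL.2.1 q (hq.trans (by simp only [T]; omega))
  -- entrywise bound
  have ent : ∀ i j, L (Y i * Y j * aeval z (pderiv j (pderiv i p))) ≤
      eval c (pderiv j (pderiv i p)) * L (Y i * Y j) +
        ε / 2 * (L (Y i ^ 2) + L (Y j ^ 2)) := by
    intro i j
    have e1 := hN i j z L (hL.mono (by have := hT i j; omega) hδ0.le (hδle (i, j))) (Y i) (hY i)
    have d1 := totalDegree_dev z hL.1 (pderiv j (pderiv i p)) (eval c (pderiv j (pderiv i p)))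
    have hdec : Y i * Y j * aeval z (pderiv j (pderiv i p)) =
        C (eval c (pderiv j (pderiv i p))) * (Y i * Y j) +
        Y i * Y j * (aeval z (pderiv j (pderiv i p)) - C (eval c (pderiv j (pderiv i p)))) := by
      ring
    rw [hdec, map_add, L_C_mul]
    have hTij := hT i j
    generalize (pderiv j (pderiv i p)).totalDegree = d at *
    generalize (aeval z (pderiv j (pderiv i p)) - C (eval c (pderiv j (pderiv i p))) :
      MvPolynomial (Fin n) ℝ) = F at *
    have dd : (F * Y i - C ε * Y j).totalDegree ≤ d + 1 :=
      totalDegree_sub_le' (totalDegree_mul_le' d1 (hY i))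
        ((totalDegree_mul_le' (totalDegree_C _).le (hY j)).trans (by omega))
    have s1 := hL.2.1 _ (dd.trans (by omega))
    have e4 : (F * Y i - C ε * Y j) ^ 2 =
        F ^ 2 * Y i ^ 2 - C (2 * ε) * (Y i * Y j * F) + C (ε ^ 2) * Y j ^ 2 := by
      have : (C 2 : MvPolynomial (Fin n) ℝ) = 2 := map_ofNat C 2
      simp only [map_mul, map_pow, this]; ring
    rw [e4, map_add, map_sub, L_C_mul, L_C_mul] at s1
    have s2 : 2 * ε * L (Y i * Y j * F) ≤ 2 * ε * (ε / 2 * (L (Y i ^ 2) + L (Y j ^ 2))) := by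
      nlinarith
    have := le_of_mul_le_mul_left s2 (by positivity)
    linarith
  let M : Matrix (Fin n) (Fin n) ℝ := Matrix.of fun i j =>
    -eval c (pderiv j (pderiv i p)) - if i = j then κ else 0
  have hM : M.IsSymm := by
    ext i j
    simp only [M, Matrix.transpose_apply, Matrix.of_apply, pderiv_pderiv_swap i j,
      eq_comm (a := i) (b := j)]
  have hMv : ∀ v : Fin n → ℝ, 0 ≤ ∑ i, ∑ j, v i * M i j * v j := by
    intro v
    have : ∑ i, ∑ j, v i * M i j * v j =
        -(∑ i, ∑ j, v i * eval c (pderiv j (pderiv i p)) * v j) - κ * ∑ i, v i ^ 2 := by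
      have h1 : ∀ i, ∑ j, v i * M i j * v j =
          -(∑ j, v i * eval c (pderiv j (pderiv i p)) * v j) - κ * v i ^ 2 := by
        intro i
        simp only [M, Matrix.of_apply, mul_sub, sub_mul, Finset.sum_sub_distrib, mul_ite, ite_mul,
          mul_zero, zero_mul, Finset.sum_ite_eq, Finset.mem_univ, if_true, mul_neg, neg_mul,
          Finset.sum_neg_distrib]
        ring
      simp only [h1, Finset.sum_sub_distrib, Finset.sum_neg_distrib, Finset.mul_sum]
    rw [this]
    linarith [h v]
  have hpsd := L_psd M hM hMv L 1 hLT Y hY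
  have hs0 : 0 ≤ ∑ i, L (Y i ^ 2) := Finset.sum_nonneg fun i _ => hLT _ (hY i)
  have hsum : ∑ i, ∑ j, M i j * L (Y i * Y j) =
      -(∑ i, ∑ j, eval c (pderiv j (pderiv i p)) * L (Y i * Y j)) - κ * ∑ i, L (Y i ^ 2) := by
    have h1 : ∀ i, ∑ j, M i j * L (Y i * Y j) =
        -(∑ j, eval c (pderiv j (pderiv i p)) * L (Y i * Y j)) - κ * L (Y i ^ 2) := by
      intro i
      simp only [M, Matrix.of_apply, sub_mul, Finset.sum_sub_distrib, ite_mul,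
        zero_mul, Finset.sum_ite_eq, Finset.mem_univ, if_true, neg_mul,
        Finset.sum_neg_distrib, sq]
    simp only [h1, Finset.sum_sub_distrib, Finset.sum_neg_distrib, Finset.mul_sum]
  rw [hsum] at hpsd
  have hfin : L (∑ i, ∑ j, Y i * Y j * aeval z (pderiv j (pderiv i p))) ≤
      ∑ i, ∑ j, eval c (pderiv j (pderiv i p)) * L (Y i * Y j) + ε * n * ∑ i, L (Y i ^ 2) := by
    simp only [map_sum]
    refine (Finset.sum_le_sum fun i _ => Finset.sum_le_sum fun j _ => ent i j).trans (le_of_eq ?_)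
    simp only [Finset.sum_add_distrib, ← Finset.mul_sum, Finset.sum_const, Finset.card_univ,
      Fintype.card_fin, nsmul_eq_mul]
    ring
  have hεn : ε * n ≤ κ := by
    rw [hε, div_mul_eq_mul_div, div_le_iff₀ (by positivity)]
    nlinarith
  nlinarith

lemma localRep {n : ℕ} (p : MvPolynomial (Fin n) ℝ) (c : Fin n → ℝ) (κ : ℝ) (hκ : 0 < κ)
    (h : ∀ v : Fin n → ℝ, ∑ i, ∑ j, v i * eval c (pderiv j (pderiv i p)) * v j ≤
      -(κ * ∑ i, v i ^ 2)) :
    ∃ δ0 : ℝ, 0 < δ0 ∧ ∀ δ, 0 < δ → δ ≤ δ0 → ∃ R : Set (Fin n → ℝ), SRep R ∧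
      (∀ x ∈ R, 0 ≤ eval x p) ∧
      ∀ x, (∀ i, |x i - c i| ≤ δ) → 0 ≤ eval x p → x ∈ R := by
  obtain ⟨N, δ0, hδ0, hN1, hN⟩ := hessBound p c κ hκ h
  refine ⟨δ0, hδ0, fun δ hδ hδle => ⟨_, momentRep p
    (fun i : Fin n => C (δ ^ 2) - (X i - C (c i)) ^ 2) (N + 1), ?_, ?_⟩⟩
  · rintro u ⟨L, h1, hX, hp, hq, hb⟩
    have hC : ∀ a, L (C a) = a := fun a => by
      have := L_C_mul L a 1
      rwa [mul_one, h1, mul_one] at this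
    have hq' : ∀ q, q.totalDegree ≤ N + 1 → 0 ≤ L (q ^ 2) := fun q hqd => by
      have := hq q hqd
      rwa [one_mul, ← sq] at this
    refine le_trans hp (jensen u p L h1 hX fun s hs => ?_)
    refine hN (zline u s) L (Nice.mono (N := N) (δ := δ) ?_ le_rfl hδ.le hδle) _
      (fun i => totalDegree_X_sub_C_le i _)
    refine ⟨totalDegree_zline u s, fun q hqd => hq' q (by omega), fun i q hqd => ?_⟩
    have hb1 := hb i q (by omega)
    have hu : (u i - c i) ^ 2 ≤ δ ^ 2 := by
      have a1 := hb i 1 (by simp)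
      have a2 := hq' (X i - C (u i)) ((totalDegree_X_sub_C_le i _).trans (by omega))
      have a3 : (C (δ ^ 2) - (X i - C (c i)) ^ 2) * 1 * 1 =
          C (δ ^ 2 - (c i) ^ 2 + (u i) ^ 2) + C (2 * (c i - u i)) * X i -
            (X i - C (u i)) ^ 2 := by
        have : (C 2 : MvPolynomial (Fin n) ℝ) = 2 := map_ofNat C 2
        simp only [map_mul, map_pow, map_add, map_sub, this]; ring
      rw [a3, map_sub, map_add, L_C_mul, hC, hX] at a1
      nlinarith
    have hb2 := hq' ((X i - C (u i)) * q)
      ((totalDegree_mul_le' (totalDegree_X_sub_C_le i _) hqd).trans (by omega))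
    have hb3 := hq' q (by omega)
    have e4 : (zline u s i - C (c i)) ^ 2 * q ^ 2 =
        C (δ ^ 2 - (1 - s) * (δ ^ 2 - (u i - c i) ^ 2)) * q ^ 2 -
        C s * ((C (δ ^ 2) - (X i - C (c i)) ^ 2) * q * q) -
        C (s * (1 - s)) * ((X i - C (u i)) * q) ^ 2 := by
      simp only [zline, map_mul, map_pow, map_sub, map_one]; ring
    rw [e4, map_sub, map_sub, L_C_mul, L_C_mul, L_C_mul]
    have t1 : 0 ≤ s * L ((C (δ ^ 2) - (X i - C (c i)) ^ 2) * q * q) := mul_nonneg hs.1 hb1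
    have t2 : 0 ≤ s * (1 - s) * L (((X i - C (u i)) * q) ^ 2) :=
      mul_nonneg (mul_nonneg hs.1 (by linarith [hs.2])) hb2
    have t3 : 0 ≤ (1 - s) * (δ ^ 2 - (u i - c i) ^ 2) * L (q ^ 2) :=
      mul_nonneg (mul_nonneg (by linarith [hs.2]) (by linarith)) hb3
    nlinarith
  · intro x hx hp
    refine ⟨evL x, ?_, ?_, ?_, ?_, ?_⟩
    · simp [evL_apply]
    · simp [evL_apply]
    · rwa [evL_apply]
    · intro q _
      rw [evL_apply, one_mul, map_mul]; exact mul_self_nonneg _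
    · intro j q _
      rw [evL_apply, mul_assoc, map_mul, map_mul]
      refine mul_nonneg ?_ (mul_self_nonneg _)
      simp only [map_sub, map_pow, eval_C, eval_X]
      have := sq_le_sq' (abs_le.1 (hx j)).1 (abs_le.1 (hx j)).2
      linarith

lemma finsler {n : ℕ} (H : Fin n → Fin n → ℝ) (a : Fin n → ℝ)
    (h : ∀ v : Fin n → ℝ, v ≠ 0 → ∑ i, a i * v i = 0 → 0 < ∑ i, ∑ j, v i * H i j * v j) :
    ∃ M κ : ℝ, 0 < κ ∧ ∀ v : Fin n → ℝ,
      κ * ∑ i, v i ^ 2 ≤ ∑ i, ∑ j, v i * H i j * v j + M * (∑ i, a i * v i) ^ 2 := by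
  let K : Set (Fin n → ℝ) := {v | ∑ i, v i ^ 2 = 1}
  let Q : ℝ → (Fin n → ℝ) → ℝ := fun M v =>
    ∑ i, ∑ j, v i * H i j * v j + M * (∑ i, a i * v i) ^ 2
  have hQc : ∀ M, Continuous (Q M) := fun M => by fun_prop
  have hKc : IsCompact K := by
    refine (isCompact_closedBall (0 : Fin n → ℝ) 1).of_isClosed_subset
      (isClosed_eq (by fun_prop) continuous_const) ?_
    intro v hv
    rw [mem_closedBall_zero_iff, pi_norm_le_iff_of_nonneg zero_le_one]
    intro i
    have h1 : v i ^ 2 ≤ ∑ i, v i ^ 2 :=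
      Finset.single_le_sum (f := fun i => v i ^ 2) (fun _ _ => sq_nonneg _) (Finset.mem_univ i)
    have hv' : ∑ i, v i ^ 2 = 1 := hv
    rw [hv'] at h1
    rw [Real.norm_eq_abs]
    exact abs_le_one_iff_mul_self_le_one.2 (by nlinarith)
  obtain ⟨k, hk⟩ := hKc.elim_directed_cover (fun k : ℕ => {v | 0 < Q k v})
    (fun k => isOpen_lt continuous_const (hQc k)) (by
      intro v hv
      have hv' : ∑ i, v i ^ 2 = 1 := hv
      have hv0 : v ≠ 0 := by
        rintro rfl
        simp at hv'
      simp only [Set.mem_iUnion, Set.mem_ofPred_eq]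
      by_cases ha : ∑ i, a i * v i = 0
      · exact ⟨0, by simpa [Q, ha] using h v hv0 ha⟩
      · have hpos : 0 < (∑ i, a i * v i) ^ 2 := by positivity
        obtain ⟨k, hk⟩ := exists_nat_gt (-(∑ i, ∑ j, v i * H i j * v j) / (∑ i, a i * v i) ^ 2)
        refine ⟨k, ?_⟩
        rw [div_lt_iff₀ hpos] at hk
        simp only [Q]; linarith) (by
      refine directed_of_isDirected_le ?_
      intro k l hkl v hv
      simp only [Set.mem_ofPred_eq, Q] at hv ⊢
      have : (k : ℝ) * (∑ i, a i * v i) ^ 2 ≤ l * (∑ i, a i * v i) ^ 2 :=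
        mul_le_mul_of_nonneg_right (by exact_mod_cast hkl) (sq_nonneg _)
      linarith)
  obtain ⟨κ, hκ, hmin⟩ : ∃ κ : ℝ, 0 < κ ∧ ∀ v ∈ K, κ ≤ Q k v := by
    rcases K.eq_empty_or_nonempty with hK | hK
    · exact ⟨1, one_pos, by simp [hK]⟩
    · obtain ⟨w, hw, hmin⟩ := hKc.exists_isMinOn hK (hQc k).continuousOn
      exact ⟨Q k w, hk hw, fun v hv => hmin hv⟩
  refine ⟨k, κ, hκ, fun v => ?_⟩
  by_cases hv : v = 0
  · subst hv; simp
  have hs : 0 < ∑ i, v i ^ 2 := by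
    obtain ⟨i, hi⟩ := Function.ne_iff.1 hv
    refine Finset.sum_pos' (fun _ _ => sq_nonneg _) ⟨i, Finset.mem_univ _, ?_⟩
    have : v i ≠ 0 := hi
    positivity
  set r := Real.sqrt (∑ i, v i ^ 2) with hr
  have hr0 : 0 < r := Real.sqrt_pos.2 hs
  have hr2 : r ^ 2 = ∑ i, v i ^ 2 := Real.sq_sqrt hs.le
  have hscale : ∀ t : ℝ, Q k (fun i => t * v i) = t ^ 2 * Q k v := by
    intro t
    simp only [Q, mul_add, Finset.mul_sum]
    congr 1
    · exact Finset.sum_congr rfl fun i _ => Finset.sum_congr rfl fun j _ => by ring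
    · have : ∑ i, a i * (t * v i) = t * ∑ i, a i * v i := by
        rw [Finset.mul_sum]; exact Finset.sum_congr rfl fun i _ => by ring
      rw [this]; ring
  have hmem : (fun i => r⁻¹ * v i) ∈ K := by
    simp only [K, Set.mem_ofPred_eq, mul_pow, ← Finset.mul_sum, ← hr2]
    field_simp
  have h1 := hmin _ hmem
  rw [hscale, inv_pow, inv_mul_eq_div, le_div_iff₀ (by positivity), hr2] at h1
  exact h1

lemma box_of_nhds {n : ℕ} {c : Fin n → ℝ} {U : Set (Fin n → ℝ)} (hU : U ∈ nhds c) :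
    ∃ δ : ℝ, 0 < δ ∧ ∀ x : Fin n → ℝ, (∀ i, |x i - c i| ≤ δ) → x ∈ U := by
  obtain ⟨δ, hδ, hsub⟩ := Metric.nhds_basis_closedBall.mem_iff.1 hU
  refine ⟨δ, hδ, fun x hx => hsub ?_⟩
  rw [Metric.mem_closedBall, dist_pi_le_iff hδ.le]
  intro i
  rw [Real.dist_eq]; exact hx i

lemma strictRep {n : ℕ} (g : MvPolynomial (Fin n) ℝ) (c : Fin n → ℝ) (hc : eval c g = 0)
    (h : ∀ v : Fin n → ℝ, v ≠ 0 → ∑ i, eval c (pderiv i g) * v i = 0 →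
      0 < -∑ i, ∑ j, v i * eval c (pderiv i (pderiv j g)) * v j) :
    ∃ δ0 : ℝ, 0 < δ0 ∧ ∀ δ, 0 < δ → δ ≤ δ0 → ∃ R : Set (Fin n → ℝ), SRep R ∧
      ∀ x, (∀ i, |x i - c i| ≤ δ) → (x ∈ R ↔ 0 ≤ eval x g) := by
  obtain ⟨M, κ, hκ, hM⟩ := finsler (fun i j => -eval c (pderiv i (pderiv j g)))
    (fun i => eval c (pderiv i g)) (by
      intro v hv hv0
      have := h v hv hv0
      simpa only [mul_neg, neg_mul, Finset.sum_neg_distrib] using this)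
  let p := g - C (M / 2) * g ^ 2
  have hess : ∀ i j, eval c (pderiv j (pderiv i p)) =
      eval c (pderiv i (pderiv j g)) - M * eval c (pderiv i g) * eval c (pderiv j g) := by
    intro i j
    simp only [p, map_sub, pderiv_mul, pderiv_C, sq, zero_mul, zero_add, map_add, map_mul, eval_C,
      hc, pderiv_pderiv_swap j i]
    ring
  obtain ⟨δ1, hδ1, hR⟩ := localRep p c κ hκ (by
    intro v
    have h1 : ∑ i, ∑ j, v i * eval c (pderiv j (pderiv i p)) * v j =
        ∑ i, ∑ j, v i * eval c (pderiv i (pderiv j g)) * v j -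
          M * (∑ i, eval c (pderiv i g) * v i) ^ 2 := by
      rw [sq, Finset.sum_mul_sum, Finset.mul_sum, ← Finset.sum_sub_distrib]
      refine Finset.sum_congr rfl fun i _ => ?_
      rw [Finset.mul_sum, ← Finset.sum_sub_distrib]
      refine Finset.sum_congr rfl fun j _ => ?_
      rw [hess]; ring
    have h2 := hM v
    simp only [mul_neg, neg_mul, Finset.sum_neg_distrib] at h2
    rw [h1]; linarith)
  have hU : {x : Fin n → ℝ | M / 2 * eval x g < 1} ∈ nhds c := by
    refine IsOpen.mem_nhds (isOpen_lt (continuous_const.mul (MvPolynomial.continuous_eval g))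
      continuous_const) ?_
    simp [hc]
  obtain ⟨δ2, hδ2, hbox⟩ := box_of_nhds hU
  refine ⟨min δ1 δ2, lt_min hδ1 hδ2, fun δ hδ hδle => ?_⟩
  obtain ⟨R, hRep, hR1, hR2⟩ := hR δ hδ (hδle.trans (min_le_left _ _))
  refine ⟨R, hRep, fun x hx => ?_⟩
  have h1 : M / 2 * eval x g < 1 := hbox x fun i => (hx i).trans (hδle.trans (min_le_right _ _))
  have hev : eval x p = eval x g * (1 - M / 2 * eval x g) := by
    simp only [p, map_sub, map_mul, map_pow, eval_C]; ring
  have hiff : 0 ≤ eval x p ↔ 0 ≤ eval x g := by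
    rw [hev]; exact mul_nonneg_iff_of_pos_right (by linarith)
  rw [← hiff]
  exact ⟨hR1 x, hR2 x hx⟩

lemma boxRep {n : ℕ} (c : Fin n → ℝ) (δ : ℝ) : SRep {x : Fin n → ℝ | ∀ i, |x i - c i| ≤ δ} := by
  have := (SRep.iInter fun i : Fin n => SRep.affine (δ + c i) (-(LinearMap.proj i :
    (Fin n → ℝ) →ₗ[ℝ] ℝ))).inter (SRep.iInter fun i : Fin n => SRep.affine (δ - c i)
    (LinearMap.proj i : (Fin n → ℝ) →ₗ[ℝ] ℝ))
  have heq : {x : Fin n → ℝ | ∀ i, |x i - c i| ≤ δ} =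
      {z | ∀ i, z ∈ {z : Fin n → ℝ | 0 ≤ δ + c i + (-(LinearMap.proj i :
        (Fin n → ℝ) →ₗ[ℝ] ℝ)) z}} ∩ {z | ∀ i, z ∈ {z : Fin n → ℝ | 0 ≤ δ - c i +
        (LinearMap.proj i : (Fin n → ℝ) →ₗ[ℝ] ℝ) z}} := by
    apply Set.ext
    intro x
    constructor
    · intro h
      refine ⟨fun i => ?_, fun i => ?_⟩
      · have := abs_le.1 (h i)
        show 0 ≤ δ + c i + -(x i)
        linarith [this.2]
      · have := abs_le.1 (h i)
        show 0 ≤ δ - c i + x i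
        linarith [this.1]
    · rintro ⟨h1, h2⟩ i
      have a1 : 0 ≤ δ + c i + -(x i) := h1 i
      have a2 : 0 ≤ δ - c i + x i := h2 i
      exact abs_le.2 ⟨by linarith, by linarith⟩
  rw [heq]
  exact this

lemma finiteHull {n : ℕ} {S : Set (Fin n → ℝ)} (hS : Convex ℝ S) (hb : Bornology.IsBounded S)
    {σ : Type} (t : Finset σ) (B : σ → Set (Fin n → ℝ)) (hB : ∀ i ∈ t, SRep (S ∩ B i))
    (ht : t.Nonempty) : ∃ R, SRep R ∧ R ⊆ S ∧ ∀ i ∈ t, S ∩ B i ⊆ R := by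
  classical
  induction ht using Finset.Nonempty.cons_induction with
  | singleton a => exact ⟨S ∩ B a, hB a (by simp), Set.inter_subset_left, by simp⟩
  | cons a t ha hne ih =>
    obtain ⟨R, hR, hRS, hRt⟩ := ih fun i hi => hB i (by simp [hi])
    obtain ⟨R', h1, h2, h3, h4⟩ := SRep.hull hS hb (hB a (by simp)) hR Set.inter_subset_left hRS
    refine ⟨R', h1, h4, fun i hi => ?_⟩
    rcases Finset.mem_cons.1 hi with rfl | hi
    · exact h2
    · exact (hRt i hi).trans h3

/-- a compact convex basic closed semialgebraic set with nonempty interior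
whose defining polynomials are sos-concave or strictly quasi-concave at every boundary
point where they vanish is SDP representable. -/
theorem isSDPRepresentable_of_sosConcave_or_strictlyQuasiConcave {n m : ℕ}
    (g : Fin m → MvPolynomial (Fin n) ℝ) (S : Set (Rn n))
    (hS : S = {x : Rn n | ∀ i, 0 ≤ peval (g i) x})
    (hcpt : IsCompact S) (hconv : Convex ℝ S) (hint : (interior S).Nonempty)
    (h : ∀ u ∈ frontier S, ∀ i, peval (g i) u = 0 →
      SosConcave (g i) ∨ StrictlyQuasiConcaveAt (g i) u) :
    IsSDPRepresentable S := by
  classical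
  let e := EuclideanSpace.equiv (Fin n) ℝ
  let D : Set (Fin n → ℝ) := {y | ∀ i, 0 ≤ eval y (g i)}
  have hSD : ∀ x : Rn n, x ∈ S ↔ (fun i => x i) ∈ D := by
    intro x; rw [hS]; rfl
  have hD : D = e.symm ⁻¹' S := by
    ext y
    exact (hSD (e.symm y)).symm
  have hDi : D = e '' S := by
    rw [hD]
    exact (e.toEquiv.image_eq_preimage_symm S).symm
  have hDc : IsCompact D := by rw [hDi]; exact hcpt.image e.continuous
  have hDconv : Convex ℝ D := by
    rw [hD]; exact hconv.linear_preimage e.symm.toLinearEquiv.toLinearMap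
  refine SRep.isSDP (C := D) ?_ hSD
  -- local representations
  have loc : ∀ c ∈ D, ∃ δ : ℝ, 0 < δ ∧ SRep (D ∩ {x | ∀ i, |x i - c i| ≤ δ}) := by
    intro c hcD
    by_cases hci : e.symm c ∈ interior S
    · have hDn : D ∈ nhds c := by
        rw [hD]
        exact e.symm.continuous.continuousAt.preimage_mem_nhds (mem_interior_iff_mem_nhds.1 hci)
      obtain ⟨δ, hδ, hbox⟩ := box_of_nhds hDn
      refine ⟨δ, hδ, ?_⟩
      have hsub : {x : Fin n → ℝ | ∀ i, |x i - c i| ≤ δ} ⊆ D := fun x hx => hbox x hx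
      rw [Set.inter_eq_right.2 hsub]
      exact boxRep c δ
    · have hcS : e.symm c ∈ S := by rw [hD] at hcD; exact hcD
      have hfr : e.symm c ∈ frontier S := by
        rw [hcpt.isClosed.frontier_eq]; exact ⟨hcS, hci⟩
      have each : ∀ k, ∃ δ0 : ℝ, 0 < δ0 ∧ ∀ δ, 0 < δ → δ ≤ δ0 → ∃ R : Set (Fin n → ℝ), SRep R ∧
          ∀ x, (∀ i, |x i - c i| ≤ δ) → (x ∈ R ↔ 0 ≤ eval x (g k)) := by
        intro k
        rcases (hcD k).eq_or_lt with h0 | hpos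
        · rcases h _ hfr k h0.symm with hsos | hsq
          · exact ⟨1, one_pos, fun δ _ _ => ⟨_, sosRep _ hsos, fun x _ => Iff.rfl⟩⟩
          · apply strictRep (g k) c h0.symm
            intro v hv hv0
            rcases hsq with ⟨_, hsq⟩ | ⟨_, hsq⟩
            · exact hsq v hv hv0
            · have := (Matrix.posDef_iff_dotProduct_mulVec.1 hsq).2 hv
              have key : star v ⬝ᵥ ((-phess (g k) (e.symm c)).mulVec v) =
                  -∑ i, ∑ j, v i * eval c (pderiv i (pderiv j (g k))) * v j := by
                simp only [dotProduct, Matrix.mulVec, Finset.mul_sum, star_trivial,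
                  ← Finset.sum_neg_distrib]
                refine Finset.sum_congr rfl fun i _ => Finset.sum_congr rfl fun j _ => ?_
                change v i * (-eval c (pderiv i (pderiv j (g k))) * v j) = _
                ring
              rwa [key] at this
        · have hU : {x : Fin n → ℝ | 0 < eval x (g k)} ∈ nhds c :=
            IsOpen.mem_nhds (isOpen_lt continuous_const (MvPolynomial.continuous_eval _)) hpos
          obtain ⟨δ2, hδ2, hbox⟩ := box_of_nhds hU
          refine ⟨δ2, hδ2, fun δ _ hδ => ⟨Set.univ, SRep.univ, fun x hx => ?_⟩⟩
          have : 0 < eval x (g k) := hbox x fun i => (hx i).trans hδ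
          simp [this.le]
      choose δ0 hδ0 hR using each
      obtain ⟨δ, hδ, hδle⟩ := exists_pos_le δ0 hδ0
      choose R hRep hRx using fun k => hR k δ hδ (hδle k)
      refine ⟨δ, hδ, ?_⟩
      have := (SRep.iInter hRep).inter (boxRep c δ)
      convert this using 1
      ext x
      constructor
      · rintro ⟨hx, hb⟩
        exact ⟨fun k => (hRx k x hb).2 (hx k), hb⟩
      · rintro ⟨hx, hb⟩
        exact ⟨fun k => (hRx k x hb).1 (hx k), hb⟩
  choose! δ hδ hloc using loc
  have hne : D.Nonempty := by
    obtain ⟨x, hx⟩ := hint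
    exact ⟨_, (hSD x).1 (interior_subset hx)⟩
  obtain ⟨t, htD, hcov⟩ := hDc.elim_nhds_subcover (fun c => {x | ∀ i, |x i - c i| ≤ δ c}) (by
    intro c hc
    refine Filter.mem_of_superset (Metric.closedBall_mem_nhds c (hδ c hc)) ?_
    intro x hx i
    rw [Metric.mem_closedBall, dist_pi_le_iff (hδ c hc).le] at hx
    have := hx i
    rwa [Real.dist_eq] at this)
  have htne : t.Nonempty := by
    obtain ⟨x, hx⟩ := hne
    obtain ⟨c, hc, _⟩ := Set.mem_iUnion₂.1 (hcov hx)
    exact ⟨c, hc⟩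
  obtain ⟨R, hRep, hRD, hRt⟩ := finiteHull hDconv hDc.isBounded t
    (fun c => {x | ∀ i, |x i - c i| ≤ δ c}) (fun c hc => hloc c (htD c hc)) htne
  have : R = D := by
    refine Set.Subset.antisymm hRD fun x hx => ?_
    obtain ⟨c, hc, hxc⟩ := Set.mem_iUnion₂.1 (hcov hx)
    exact hRt c hc ⟨hx, hxc⟩
  rwa [← this]
end
end

section
/- Let T ⊆ ℝⁿ be a compact set. If for every u ∈ ∂_cT there exists δ > 0 such that conv(T ∩ B̄(u, δ)) is SDP representable, then conv(T) is SDP representable, where B̄(u, δ) = {x ∈ ℝⁿ : ‖x − u‖ ≤ δ}. -/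
open MvPolynomial Metric Set Pointwise Filter

noncomputable section

open Matrix in
theorem posSemidef_fromBlocks_diag {m k : Type*} [Fintype m] [Fintype k]
    (A : Matrix m m ℝ) (D : Matrix k k ℝ) :
    (fromBlocks A 0 0 D).PosSemidef ↔ A.PosSemidef ∧ D.PosSemidef := by
  constructor
  · intro h
    exact ⟨h.submatrix Sum.inl, h.submatrix Sum.inr⟩
  · rintro ⟨hA, hD⟩
    refine PosSemidef.of_dotProduct_mulVec_nonneg ?_ ?_
    · exact IsHermitian.fromBlocks hA.1 (by simp) hD.1
    · intro x
      rw [fromBlocks_mulVec]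
      have h1 := hA.dotProduct_mulVec_nonneg (x ∘ Sum.inl)
      have h2 := hD.dotProduct_mulVec_nonneg (x ∘ Sum.inr)
      simp only [dotProduct, Fintype.sum_sum_type, Sum.elim_inl, Sum.elim_inr, zero_mulVec,
        add_zero, zero_add] at h1 h2 ⊢
      exact add_nonneg h1 h2

theorem posSemidef_unit_iff (a : ℝ) :
    (Matrix.diagonal (fun _ : Unit => a)).PosSemidef ↔ 0 ≤ a := by
  rw [Matrix.posSemidef_diagonal_iff]
  exact ⟨fun h => h (), fun h _ => h⟩

theorem isSDPRepresentable_of_linear {n : ℕ} {W d : Type*} [AddCommGroup W] [Module ℝ W]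
    [FiniteDimensional ℝ W] [Fintype d] [DecidableEq d] (A₀ : Matrix d d ℝ)
    (L : (Rn n × W) →ₗ[ℝ] Matrix d d ℝ) (h0 : A₀.IsSymm) (hL : ∀ p, (L p).IsSymm) :
    IsSDPRepresentable {x : Rn n | ∃ w, (A₀ + L (x, w)).PosSemidef} := by
  let b := Module.finBasis ℝ W
  let e := Fintype.equivFin d
  refine ⟨Module.finrank ℝ W, Fintype.card d, A₀.submatrix e.symm e.symm,
    fun i => (L (EuclideanSpace.single i 1, 0)).submatrix e.symm e.symm,
    fun j => (L (0, b j)).submatrix e.symm e.symm, h0.submatrix _, fun i => (hL _).submatrix _,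
    fun j => (hL _).submatrix _, ?_⟩
  have key : ∀ (x : Rn n) (u : Fin (Module.finrank ℝ W) → ℝ),
      A₀.submatrix e.symm e.symm
        + ∑ i, x i • (L (EuclideanSpace.single i 1, 0)).submatrix e.symm e.symm
        + ∑ j, u j • (L (0, b j)).submatrix e.symm e.symm
      = (A₀ + L (x, ∑ j, u j • b j)).submatrix e.symm e.symm := by
    intro x u
    have hx : (x, ∑ j, u j • b j) = ∑ i, x i • ((EuclideanSpace.single i 1 : Rn n), (0 : W))
        + ∑ j, u j • ((0 : Rn n), b j) := by
      refine Prod.ext ?_ ?_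
      · simp only [Prod.fst_add, Prod.fst_sum, Prod.smul_fst, smul_zero, Finset.sum_const_zero,
          add_zero]
        ext k
        simp [Finset.sum_apply, Pi.single_apply]
      · simp [Prod.snd_sum]
    rw [hx, map_add, map_sum, map_sum]
    simp only [map_smul]
    ext i j
    simp [Matrix.sum_apply, add_assoc]
  ext x
  simp only [mem_setOf_eq, key, Matrix.posSemidef_submatrix_equiv]
  constructor
  · rintro ⟨w, hw⟩
    exact ⟨b.repr w, by rwa [b.sum_repr]⟩
  · rintro ⟨u, hu⟩
    exact ⟨_, hu⟩

theorem IsSDPRepresentable.exists_linear {n : ℕ} {S : Set (Rn n)} (h : IsSDPRepresentable S) :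
    ∃ (N d : ℕ) (A₀ : Matrix (Fin d) (Fin d) ℝ)
      (L : (Rn n × (Fin N → ℝ)) →ₗ[ℝ] Matrix (Fin d) (Fin d) ℝ),
      A₀.IsSymm ∧ (∀ p, (L p).IsSymm) ∧
      S = {x : Rn n | ∃ w, (A₀ + L (x, w)).PosSemidef} := by
  obtain ⟨N, d, A₀, A, B, h0, hA, hB, rfl⟩ := h
  refine ⟨N, d, A₀,
    { toFun := fun p => ∑ i, p.1 i • A i + ∑ j, p.2 j • B j
      map_add' := ?_
      map_smul' := ?_ }, h0, ?_, ?_⟩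
  · intro p q
    simp only [Prod.fst_add, Prod.snd_add, PiLp.add_apply, Pi.add_apply, add_smul,
      Finset.sum_add_distrib]
    abel
  · intro c p
    simp [Finset.smul_sum, mul_smul]
  · intro p
    simp only [LinearMap.coe_mk, AddHom.coe_mk, Matrix.IsSymm, Matrix.transpose_add,
      Matrix.transpose_sum, Matrix.transpose_smul, (hA _).eq, (hB _).eq]
  · ext x
    simp [add_assoc]

theorem recession_eq_zero {n : ℕ} {W : Type*} [AddCommGroup W] [Module ℝ W] {d : ℕ}
    (A₀ : Matrix (Fin d) (Fin d) ℝ) (L : (Rn n × W) →ₗ[ℝ] Matrix (Fin d) (Fin d) ℝ)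
    (hne : {x : Rn n | ∃ w, (A₀ + L (x, w)).PosSemidef}.Nonempty)
    (hb : Bornology.IsBounded {x : Rn n | ∃ w, (A₀ + L (x, w)).PosSemidef})
    (y : Rn n) (w : W) (hy : (L (y, w)).PosSemidef) : y = 0 := by
  obtain ⟨x0, w0, h0⟩ := hne
  obtain ⟨C, hC⟩ := hb.exists_norm_le
  by_contra hne
  have hpos : 0 < ‖y‖ := norm_pos_iff.2 hne
  have hmem : ∀ t : ℝ, 0 ≤ t → ‖x0 + t • y‖ ≤ C := by
    intro t ht
    refine hC _ ⟨w0 + t • w, ?_⟩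
    have : A₀ + L (x0 + t • y, w0 + t • w) = (A₀ + L (x0, w0)) + t • L (y, w) := by
      rw [← map_smul, add_assoc, ← map_add]; simp
    rw [this]
    exact h0.add (hy.smul ht)
  have hC0 : ‖x0‖ ≤ C := by simpa using hmem 0 le_rfl
  have hx0 := norm_nonneg x0
  have h1 := hmem ((C + ‖x0‖ + 1) / ‖y‖) (by apply div_nonneg <;> linarith)
  have h2 : ‖((C + ‖x0‖ + 1) / ‖y‖) • y‖ = C + ‖x0‖ + 1 := by
    rw [norm_smul, Real.norm_of_nonneg (by apply div_nonneg <;> linarith)]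
    field_simp
  have h3 := norm_sub_norm_le (((C + ‖x0‖ + 1) / ‖y‖) • y) (-x0)
  rw [sub_neg_eq_add, norm_neg, add_comm _ x0] at h3
  linarith

/-- scaled membership -/
theorem scaled_mem {n : ℕ} {W : Type*} [AddCommGroup W] [Module ℝ W] {d : ℕ}
    (A₀ : Matrix (Fin d) (Fin d) ℝ) (L : (Rn n × W) →ₗ[ℝ] Matrix (Fin d) (Fin d) ℝ)
    (hne : {x : Rn n | ∃ w, (A₀ + L (x, w)).PosSemidef}.Nonempty)
    (hb : Bornology.IsBounded {x : Rn n | ∃ w, (A₀ + L (x, w)).PosSemidef})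
    (a : ℝ) (ha : 0 ≤ a) (y : Rn n) :
    (∃ w, (a • A₀ + L (y, w)).PosSemidef) ↔
      ∃ z ∈ {x : Rn n | ∃ w, (A₀ + L (x, w)).PosSemidef}, y = a • z := by
  constructor
  · rintro ⟨w, hw⟩
    rcases ha.eq_or_lt with rfl | ha
    · obtain ⟨z, hz⟩ := hne
      refine ⟨z, hz, ?_⟩
      rw [zero_smul]
      exact recession_eq_zero A₀ L ⟨z, hz⟩ hb y w (by simpa using hw)
    · refine ⟨a⁻¹ • y, ⟨a⁻¹ • w, ?_⟩, by rw [smul_inv_smul₀ ha.ne']⟩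
      have : A₀ + L (a⁻¹ • y, a⁻¹ • w) = a⁻¹ • (a • A₀ + L (y, w)) := by
        rw [smul_add, inv_smul_smul₀ ha.ne', ← map_smul]; rfl
      rw [this]
      exact hw.smul (inv_nonneg.2 ha.le)
  · rintro ⟨z, ⟨w, hw⟩, rfl⟩
    refine ⟨a • w, ?_⟩
    have : a • A₀ + L (a • z, a • w) = a • (A₀ + L (z, w)) := by
      rw [smul_add, ← map_smul]; rfl
    rw [this]
    exact hw.smul ha

open Matrix in
theorem IsSDPRepresentable.convexHull_union {n : ℕ} {S T : Set (Rn n)}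
    (hS : IsSDPRepresentable S) (hT : IsSDPRepresentable T) (cS : Convex ℝ S) (cT : Convex ℝ T)
    (bS : Bornology.IsBounded S) (bT : Bornology.IsBounded T) (nS : S.Nonempty)
    (nT : T.Nonempty) : IsSDPRepresentable (convexHull ℝ (S ∪ T)) := by
  rw [cS.convexHull_union cT nS nT]
  obtain ⟨N, d, A, L, hA, hL, rfl⟩ := hS.exists_linear
  obtain ⟨M, k, B, K, hB, hK, rfl⟩ := hT.exists_linear
  let G : (Rn n × (ℝ × Rn n × (Fin N → ℝ) × (Fin M → ℝ))) →ₗ[ℝ]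
      Matrix ((Fin d ⊕ Unit) ⊕ (Fin k ⊕ Unit)) ((Fin d ⊕ Unit) ⊕ (Fin k ⊕ Unit)) ℝ :=
    { toFun := fun p => fromBlocks
        (fromBlocks (p.2.1 • A + L (p.2.2.1, p.2.2.2.1)) 0 0 (diagonal fun _ => p.2.1)) 0 0
        (fromBlocks (-p.2.1 • B + K (p.1 - p.2.2.1, p.2.2.2.2)) 0 0 (diagonal fun _ => -p.2.1))
      map_add' := by
        rintro ⟨x, a, y, w, v⟩ ⟨x', a', y', w', v'⟩
        have h1 : L (y + y', w + w') = L (y, w) + L (y', w') := by rw [← map_add]; rfl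
        have h2 : K (x + x' - (y + y'), v + v') = K (x - y, v) + K (x' - y', v') := by
          rw [← map_add, Prod.mk_add_mk, add_sub_add_comm]
        simp only [Prod.mk_add_mk, h1, h2, fromBlocks_add, diagonal_add, add_zero]
        congr 2
        · rw [add_smul]; abel
        · rw [neg_add, add_smul]; abel
        · congr 1; ext; ring
      map_smul' := by
        rintro c ⟨x, a, y, w, v⟩
        have h1 : L (c • y, c • w) = c • L (y, w) := by rw [← map_smul]; rfl
        have h2 : K (c • x - c • y, c • v) = c • K (x - y, v) := by
          rw [← map_smul, Prod.smul_mk, smul_sub]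
        simp only [Prod.smul_mk, h1, h2, fromBlocks_smul, ← diagonal_smul, smul_zero,
          RingHom.id_apply]
        congr 2
        · rw [smul_add, smul_eq_mul, mul_smul]
        · rw [smul_add, smul_eq_mul, ← mul_neg, mul_smul]
        · congr 1; ext; simp }
  let C : Matrix ((Fin d ⊕ Unit) ⊕ (Fin k ⊕ Unit)) ((Fin d ⊕ Unit) ⊕ (Fin k ⊕ Unit)) ℝ :=
    fromBlocks 0 0 0 (fromBlocks B 0 0 (diagonal fun _ => 1))
  have hC : C.IsSymm := by
    refine IsSymm.fromBlocks (by simp) (by simp) (IsSymm.fromBlocks hB (by simp) ?_)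
    exact isSymm_diagonal _
  have hG : ∀ p, (G p).IsSymm := by
    intro p
    refine IsSymm.fromBlocks (IsSymm.fromBlocks ((hA.smul _).add (hL _)) (by simp)
      (isSymm_diagonal _)) (by simp) (IsSymm.fromBlocks ((hB.smul _).add (hK _)) (by simp)
      (isSymm_diagonal _))
  have hrep := isSDPRepresentable_of_linear C G hC hG
  convert hrep using 1
  have hCG : ∀ x a y w v, (C + G (x, a, y, w, v)).PosSemidef ↔
      ((a • A + L (y, w)).PosSemidef ∧ 0 ≤ a) ∧
      (((1 - a) • B + K (x - y, v)).PosSemidef ∧ 0 ≤ 1 - a) := by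
    intro x a y w v
    have : C + G (x, a, y, w, v) = fromBlocks
        (fromBlocks (a • A + L (y, w)) 0 0 (diagonal fun _ => a)) 0 0
        (fromBlocks ((1 - a) • B + K (x - y, v)) 0 0 (diagonal fun _ => 1 - a)) := by
      simp only [C, G, LinearMap.coe_mk, AddHom.coe_mk, fromBlocks_add, diagonal_add, zero_add,
        add_zero]
      congr 2
      rw [sub_smul, one_smul, neg_smul]; abel
    rw [this, posSemidef_fromBlocks_diag, posSemidef_fromBlocks_diag, posSemidef_fromBlocks_diag,
      posSemidef_unit_iff, posSemidef_unit_iff]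
  ext x
  rw [mem_convexJoin]
  constructor
  · rintro ⟨p, hp, q, hq, a, b, ha, hb, hab, rfl⟩
    obtain rfl : b = 1 - a := by linarith
    obtain ⟨w, hw⟩ := (scaled_mem A L nS bS a ha (a • p)).2 ⟨p, hp, rfl⟩
    obtain ⟨v, hv⟩ := (scaled_mem B K nT bT (1 - a) hb ((1 - a) • q)).2 ⟨q, hq, rfl⟩
    refine ⟨(a, a • p, w, v), (hCG _ _ _ _ _).2 ⟨⟨hw, ha⟩, ?_, hb⟩⟩
    rwa [add_sub_cancel_left]
  · rintro ⟨⟨a, y, w, v⟩, h⟩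
    obtain ⟨⟨hw, ha⟩, hv, hb⟩ := (hCG _ _ _ _ _).1 h
    obtain ⟨p, hp, hyp⟩ := (scaled_mem A L nS bS a ha y).1 ⟨w, hw⟩
    obtain ⟨q, hq, hyq⟩ := (scaled_mem B K nT bT (1 - a) hb (x - y)).1 ⟨v, hv⟩
    refine ⟨p, hp, q, hq, a, 1 - a, ha, hb, by ring, ?_⟩
    rw [← hyp, ← hyq]; abel

theorem isSDPRepresentable_empty {n : ℕ} : IsSDPRepresentable (∅ : Set (Rn n)) := by
  refine ⟨0, 1, -1, 0, 0, by simp [Matrix.IsSymm], by simp, by simp, ?_⟩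
  ext x
  simp only [mem_empty_iff_false, mem_setOf_eq, false_iff, not_exists]
  intro u hu
  have := hu.diag_nonneg (i := 0)
  simp at this
  linarith

theorem isSDPRepresentable_univ {n : ℕ} : IsSDPRepresentable (univ : Set (Rn n)) := by
  refine ⟨0, 1, 0, 0, 0, by simp, by simp, by simp, ?_⟩
  ext x
  simp [Matrix.PosSemidef.zero]

/-- convex hull of a finite union -/
theorem isSDPRepresentable_convexHull_biUnion {n : ℕ} {ι : Type*} (t : Finset ι)
    (F : ι → Set (Rn n)) (hb : ∀ i ∈ t, Bornology.IsBounded (F i))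
    (hne : ∀ i ∈ t, (F i).Nonempty) (hF : ∀ i ∈ t, IsSDPRepresentable (convexHull ℝ (F i))) :
    IsSDPRepresentable (convexHull ℝ (⋃ i ∈ t, F i)) := by
  classical
  induction t using Finset.induction_on with
  | empty => simpa using isSDPRepresentable_empty
  | insert i s his ih =>
    rw [Finset.set_biUnion_insert]
    have ih' := ih (fun j hj => hb j (Finset.mem_insert_of_mem hj))
      (fun j hj => hne j (Finset.mem_insert_of_mem hj))
      (fun j hj => hF j (Finset.mem_insert_of_mem hj))
    have h1 := hF i (Finset.mem_insert_self _ _)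
    rcases eq_empty_or_nonempty (⋃ j ∈ s, F j) with he | hn
    · rw [he, union_empty]; exact h1
    · rw [← convexHull_convexHull_union_left, ← convexHull_convexHull_union_right]
      refine IsSDPRepresentable.convexHull_union h1 ih' (convex_convexHull _ _)
        (convex_convexHull _ _) (isBounded_convexHull.2 (hb i (Finset.mem_insert_self _ _)))
        (isBounded_convexHull.2 ?_) (hne i (Finset.mem_insert_self _ _)).convexHull hn.convexHull
      exact (Bornology.isBounded_biUnion_finset s).2
        fun j hj => hb j (Finset.mem_insert_of_mem hj)

/-- In finite dimension, the convex hull of a compact set is compact. -/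
theorem isCompact_convexHull_rn {n : ℕ} {S : Set (Rn n)} (hS : IsCompact S) :
    IsCompact (convexHull ℝ S) := by
  rcases S.eq_empty_or_nonempty with rfl | ⟨s0, hs0⟩
  · simp
  have hc : IsCompact ((stdSimplex ℝ (Fin (n + 1))) ×ˢ
      (Set.pi univ fun _ : Fin (n + 1) => S)) :=
    (isCompact_stdSimplex ℝ _).prod (isCompact_univ_pi fun _ => hS)
  have himg := hc.image (f := fun p : (Fin (n + 1) → ℝ) × (Fin (n + 1) → Rn n) =>
    ∑ i, p.1 i • p.2 i) (by fun_prop)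
  convert himg using 1
  ext x
  constructor
  · intro hx
    obtain ⟨ι, _, z, w, hz, hai, hw, hw1, hx⟩ := eq_pos_convex_span_of_mem_convexHull hx
    have hcard : Fintype.card ι ≤ Fintype.card (Fin (n + 1)) := by
      have h1 := hai.card_le_finrank_succ
      have h2 := Submodule.finrank_le (vectorSpan ℝ (Set.range z))
      have h3 : Module.finrank ℝ (Rn n) = n := finrank_euclideanSpace_fin
      rw [Fintype.card_fin]
      omega
    obtain ⟨g⟩ := Function.Embedding.nonempty_of_card_le hcard
    have hg := g.injective
    refine ⟨(Function.extend g w 0, Function.extend g z fun _ => s0), ⟨⟨?_, ?_⟩, ?_⟩, ?_⟩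
    · intro i
      by_cases hi : ∃ a, g a = i
      · obtain ⟨a, rfl⟩ := hi
        simpa [hg.extend_apply] using (hw a).le
      · simp [Function.extend_apply' _ _ _ hi]
    · rw [← hw1]
      symm
      refine Fintype.sum_of_injective g hg _ _ ?_ ?_
      · intro i hi
        exact Function.extend_apply' _ _ _ hi
      · intro i
        simp [hg.extend_apply]
    · intro i _
      by_cases hi : ∃ a, g a = i
      · obtain ⟨a, rfl⟩ := hi
        simpa [hg.extend_apply] using hz (mem_range_self a)
      · simpa [Function.extend_apply' _ _ _ hi] using hs0
    · rw [← hx]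
      symm
      refine Fintype.sum_of_injective g hg _ _ ?_ ?_
      · intro i hi
        have : Function.extend g w 0 i = 0 := Function.extend_apply' _ _ _ hi
        simp [this]
      · intro i
        simp [hg.extend_apply]
  · rintro ⟨⟨w, z⟩, ⟨⟨hw, hw1⟩, hz⟩, rfl⟩
    exact (convex_convexHull ℝ S).sum_mem (fun i _ => hw i) hw1
      fun i _ => subset_convexHull ℝ S (hz i (mem_univ i))

theorem sum_eq_inner_rn {n : ℕ} (l x : Rn n) : ∑ i, l i * x i = inner ℝ l x := by
  rw [PiLp.inner_apply]
  simp [mul_comm]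

theorem isCompact_convexBoundary {n : ℕ} {T : Set (Rn n)} (hT : IsCompact T) :
    IsCompact (convexBoundary T) := by
  have hc : IsCompact ((T ×ˢ sphere (0 : Rn n) 1) ∩
      {p : Rn n × Rn n | ∀ x ∈ T, inner ℝ p.2 p.1 ≤ inner ℝ p.2 x}) := by
    refine (hT.prod (isCompact_sphere _ _)).inter_right ?_
    simp only [setOf_forall]
    exact isClosed_biInter fun x _ => isClosed_le (by fun_prop) (by fun_prop)
  convert hc.image continuous_fst using 1
  ext u
  simp only [convexBoundary, sum_eq_inner_rn]
  constructor
  · rintro ⟨hu, l, hl, hmin⟩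
    exact ⟨(u, l), ⟨⟨hu, by simpa using hl⟩, hmin⟩, rfl⟩
  · rintro ⟨⟨u, l⟩, ⟨⟨hu, hl⟩, hmin⟩, rfl⟩
    exact ⟨hu, l, by simpa using hl, hmin⟩

theorem exists_min_mem_convexBoundary {n : ℕ} {T : Set (Rn n)} (hT : IsCompact T)
    (hne : T.Nonempty) {l : Rn n} (hl : l ≠ 0) :
    ∃ u ∈ convexBoundary T, ∀ x ∈ T, (inner ℝ l u : ℝ) ≤ inner ℝ l x := by
  obtain ⟨u, hu, hmin⟩ := hT.exists_isMinOn hne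
    (f := fun x => (inner ℝ l x : ℝ)) (by fun_prop)
  have hmin' : ∀ x ∈ T, (inner ℝ l u : ℝ) ≤ inner ℝ l x := fun x hx => hmin hx
  refine ⟨u, ⟨hu, ‖l‖⁻¹ • l, ?_, ?_⟩, hmin'⟩
  · rw [norm_smul, norm_inv, norm_norm, inv_mul_cancel₀ (norm_ne_zero_iff.2 hl)]
  · intro x hx
    simp only [sum_eq_inner_rn, real_inner_smul_left]
    exact mul_le_mul_of_nonneg_left (hmin' x hx) (by positivity)

theorem subset_convexHull_of_convexBoundary_subset {n : ℕ} (hn : n ≠ 0) {T K : Set (Rn n)}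
    (hT : IsCompact T) (hK : IsCompact K) (hsub : convexBoundary T ⊆ K) :
    T ⊆ convexHull ℝ K := by
  intro x hx
  by_contra hxK
  obtain ⟨f, c, hfx, hfK⟩ := geometric_hahn_banach_point_closed (convex_convexHull ℝ K)
    (isCompact_convexHull_rn hK).isClosed hxK
  have : NeZero n := ⟨hn⟩
  obtain ⟨l, rfl⟩ := (InnerProductSpace.toDual ℝ (Rn n)).surjective f
  simp only [InnerProductSpace.toDual_apply_apply] at hfx hfK
  have hKmem : ∀ u ∈ convexBoundary T, c < (inner ℝ l u : ℝ) :=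
    fun u hu => hfK u (subset_convexHull ℝ K (hsub hu))
  have hl : l ≠ 0 := by
    rintro rfl
    obtain ⟨u, hu, -⟩ := exists_min_mem_convexBoundary hT ⟨x, hx⟩
      (l := EuclideanSpace.single (0 : Fin n) (1 : ℝ)) (by simp)
    have := hKmem u hu
    simp only [inner_zero_left] at this hfx
    linarith
  obtain ⟨u, hu, hmin⟩ := exists_min_mem_convexBoundary hT ⟨x, hx⟩ hl
  have h1 := hKmem u hu
  have h2 := hmin x hx
  linarith

/-- if near every point of the convex boundary some
`conv(T ∩ B̄(u, δ))` is SDP representable, then `conv(T)` is. -/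
theorem isSDPRepresentable_convexHull_of_local {n : ℕ} (T : Set (Rn n))
    (hcpt : IsCompact T)
    (h : ∀ u ∈ convexBoundary T, ∃ δ > 0,
      IsSDPRepresentable (convexHull ℝ (T ∩ closedBall u δ))) :
    IsSDPRepresentable (convexHull ℝ T) := by
  rcases eq_or_ne n 0 with rfl | hn
  · rcases T.eq_empty_or_nonempty with rfl | hne
    · simpa using isSDPRepresentable_empty
    · rw [Subsingleton.eq_univ_of_nonempty hne.convexHull]
      exact isSDPRepresentable_univ
  choose! δ hδ hrep using h
  obtain ⟨t, ht, hcov⟩ := (isCompact_convexBoundary hcpt).elim_nhds_subcover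
    (fun u => closedBall u (δ u)) (fun u hu => closedBall_mem_nhds u (hδ u hu))
  have hKc : IsCompact (⋃ u ∈ t, T ∩ closedBall u (δ u)) :=
    t.isCompact_biUnion fun u _ => hcpt.inter_right isClosed_closedBall
  have hsub : convexBoundary T ⊆ ⋃ u ∈ t, T ∩ closedBall u (δ u) := by
    intro u hu
    have := hcov hu
    simp only [mem_iUnion, mem_inter_iff] at this ⊢
    obtain ⟨v, hv, huv⟩ := this
    exact ⟨v, hv, hu.1, huv⟩
  have heq : convexHull ℝ T = convexHull ℝ (⋃ u ∈ t, T ∩ closedBall u (δ u)) := by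
    apply Subset.antisymm
    · exact convexHull_min (subset_convexHull_of_convexBoundary_subset hn hcpt hKc hsub)
        (convex_convexHull _ _)
    · exact convexHull_mono (iUnion₂_subset fun u _ => inter_subset_left)
  rw [heq]
  refine isSDPRepresentable_convexHull_biUnion t _ ?_ ?_ ?_
  · exact fun u _ => hcpt.isBounded.subset inter_subset_left
  · exact fun u hu => ⟨u, (ht u hu).1, mem_closedBall_self (hδ u (ht u hu)).le⟩
  · exact fun u hu => hrep u (ht u hu)
end
end
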